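/- Let Ω ⊂ ℂ be a bounded domain containing 0 whose boundary is an analytic Jordan curve, and let φ be a negative continuous subharmonic exhaustion function for Ω that is harmonic on Ω ∖ K for some compact set K ⊂ Ω. Then for p > 0 a holomorphic function f on Ω belongs to the Poletsky–Stessin Hardy space H^p_φ(Ω) if and only if |f|^p has a harmonic majorant on Ω; that is, H^p_φ(Ω) = H^p(Ω). -/

import Mathlib

open MeasureTheory Filter Metric Complex Set
open scoped Real ENNReal Topology

noncomputable section

/-- The Laplacian of a real-valued function on `ℂ ≅ ℝ²`. -/
def lap (φ : ℂ → ℝ) (z : ℂ) : ℝ :=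
  fderiv ℝ (fun w => fderiv ℝ φ w 1) z 1 +
    fderiv ℝ (fun w => fderiv ℝ φ w Complex.I) z Complex.I

/-- `h` is harmonic on `s`. -/
def HarmonicOn (h : ℂ → ℝ) (s : Set ℂ) : Prop :=
  ContDiffOn ℝ 2 h s ∧ ∀ z ∈ s, lap h z = 0

/-- `u` is subharmonic on `s` (continuous with the sub-mean-value property). -/
def SubharmonicOn (u : ℂ → ℝ) (s : Set ℂ) : Prop :=
  ContinuousOn u s ∧ ∀ z ∈ s, ∀ r : ℝ, 0 < r → closedBall z r ⊆ s →
    u z ≤ (2 * Real.pi)⁻¹ *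
      ∫ t in (0:ℝ)..(2 * Real.pi), u (z + (r : ℂ) * Complex.exp ((t : ℂ) * Complex.I))

/-- `u` is a negative continuous subharmonic exhaustion function for `Ω`:
sublevel sets `{u < c}`, `c < 0`, are relatively compact in `Ω`. -/
structure IsExhaustion (u : ℂ → ℝ) (Ω : Set ℂ) : Prop where
  neg : ∀ z ∈ Ω, u z < 0
  subh : SubharmonicOn u Ω
  exh : ∀ c : ℝ, c < 0 → IsCompact (closure {z | z ∈ Ω ∧ u z < c}) ∧
    closure {z | z ∈ Ω ∧ u z < c} ⊆ Ω

/-- `ν` is the Riesz measure `dd^c u = (1/4) Δu dA` of `u` on `Ω`, characterized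
distributionally: `∫ φ dν = (1/4) ∫_Ω u Δφ dA` for test functions `φ`. -/
def IsRieszMeasure (u : ℂ → ℝ) (Ω : Set ℂ) (ν : Measure ℂ) : Prop :=
  ν Ωᶜ = 0 ∧
  ∀ φ : ℂ → ℝ, ContDiff ℝ 2 φ → HasCompactSupport φ → tsupport φ ⊆ Ω →
    ∫ z, φ z ∂ν = (4 : ℝ)⁻¹ * ∫ z in Ω, u z * lap φ z

/-- `μ` is the Monge–Ampère measure `μ_{u,r} = dd^c max(u,r) - χ_{Ω∖{u<r}} dd^c u`,
where `ν = dd^c u`. -/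
def IsMAMeasure (u : ℂ → ℝ) (Ω : Set ℂ) (ν : Measure ℂ) (r : ℝ) (μ : Measure ℂ) : Prop :=
  ∃ νr : Measure ℂ, IsRieszMeasure (fun z => max (u z) r) Ω νr ∧
    μ = νr - ν.restrict {z | z ∈ Ω ∧ r ≤ u z}

/-- The `p`-th power of the Poletsky–Stessin Hardy "norm",
`limsup_{r→0⁻} ∫ |f|^p dμ_{u,r}`. -/
def psNormPow (p : ℝ) (μfam : ℝ → Measure ℂ) (f : ℂ → ℂ) : ℝ≥0∞ :=
  Filter.limsup (fun r => ∫⁻ z, ENNReal.ofReal (‖f z‖ ^ p) ∂(μfam r))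
    (nhdsWithin 0 (Set.Iio 0))

/-- The Poletsky–Stessin Hardy norm. -/
def psNorm (p : ℝ) (μfam : ℝ → Measure ℂ) (f : ℂ → ℂ) : ℝ≥0∞ :=
  psNormPow p μfam f ^ (1 / p)

/-- Membership in the Poletsky–Stessin Hardy space `H^p_u(Ω)`, where `μfam r = μ_{u,r}`. -/
def MemPS (p : ℝ) (Ω : Set ℂ) (μfam : ℝ → Measure ℂ) (f : ℂ → ℂ) : Prop :=
  DifferentiableOn ℂ f Ω ∧ psNormPow p μfam f < ⊤

/-- Membership in the classical Hardy space `H^p(Ω)`: `|f|^p` has a harmonic majorant. -/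
def MemHClassical (p : ℝ) (Ω : Set ℂ) (f : ℂ → ℂ) : Prop :=
  DifferentiableOn ℂ f Ω ∧
    ∃ h : ℂ → ℝ, HarmonicOn h Ω ∧ ∀ z ∈ Ω, ‖f z‖ ^ p ≤ h z

/-- A bounded domain in `ℂ` containing `0` whose boundary is an analytic Jordan curve:
there is a conformal map of the unit disc onto `Ω` extending analytically and injectively
across the closed disc, carrying the unit circle onto the boundary of `Ω`. -/
structure AnalyticJordanDomain (Ω : Set ℂ) : Prop where
  isOpen : IsOpen Ω
  isConnected : IsConnected Ω
  isBounded : Bornology.IsBounded Ω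
  zero_mem : (0:ℂ) ∈ Ω
  analyticBoundary : ∃ (U : Set ℂ) (ψ : ℂ → ℂ), IsOpen U ∧ closedBall (0:ℂ) 1 ⊆ U ∧
    DifferentiableOn ℂ ψ U ∧ Set.InjOn ψ U ∧ ψ '' ball (0:ℂ) 1 = Ω ∧
    ψ '' sphere (0:ℂ) 1 = frontier Ω

/-- `μ` is the boundary Monge–Ampère measure: the weak* limit of the measures
`μfam r = μ_{u,r}` as `r → 0⁻`. -/
def IsBoundaryMA (μfam : ℝ → Measure ℂ) (μ : Measure ℂ) : Prop :=
  ∀ φ : ℂ → ℝ, Continuous φ →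
    Filter.Tendsto (fun r => ∫ z, φ z ∂(μfam r)) (nhdsWithin 0 (Set.Iio 0))
      (nhds (∫ z, φ z ∂μ))

/-- `f` has nontangential limit `L` at the boundary point `ξ` of `Ω`. -/
def NTLim (Ω : Set ℂ) (f : ℂ → ℂ) (ξ : ℂ) (L : ℂ) : Prop :=
  ∀ C : ℝ, 1 < C →
    Filter.Tendsto f
      (nhdsWithin ξ {z | z ∈ Ω ∧ dist z ξ ≤ C * infDist z (frontier Ω)}) (nhds L)

/-- Arc length measure on the boundary of `Ω` (1-dimensional Hausdorff measure). -/
def arcLen (Ω : Set ℂ) : Measure ℂ := (μH[1] : Measure ℂ).restrict (frontier Ω)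



theorem lap_congr {u v : ℂ → ℝ} {z : ℂ} (h : u =ᶠ[𝓝 z] v) : lap u z = lap v z := by
  have h1 : ∀ d : ℂ, fderiv ℝ (fun w => fderiv ℝ u w d) z = fderiv ℝ (fun w => fderiv ℝ v w d) z := by
    intro d
    apply Filter.EventuallyEq.fderiv_eq
    filter_upwards [h.eventuallyEq_nhds] with w hw
    rw [hw.fderiv_eq]
  simp only [lap, h1]

theorem fderiv_diffAt {u : ℂ → ℝ} {z : ℂ} (hu : ContDiffAt ℝ 2 u z) :
    DifferentiableAt ℝ (fderiv ℝ u) z :=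
  (hu.fderiv_right (m := 1) (by norm_num)).differentiableAt (by norm_num)

theorem lap_eq {u : ℂ → ℝ} {z : ℂ} (hu : ContDiffAt ℝ 2 u z) :
    lap u z = fderiv ℝ (fderiv ℝ u) z 1 1 + fderiv ℝ (fderiv ℝ u) z I I := by
  have h := fderiv_diffAt hu
  have h1 : ∀ d : ℂ, fderiv ℝ (fun w => fderiv ℝ u w d) z d = fderiv ℝ (fderiv ℝ u) z d d := by
    intro d
    have := (h.hasFDerivAt.clm_apply (hasFDerivAt_const d z)).fderiv
    rw [this]; simp
  simp only [lap, h1]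

theorem lap_eq_laplacian {u : ℂ → ℝ} {z : ℂ} (hu : ContDiffAt ℝ 2 u z) :
    lap u z = Laplacian.laplacian u z := by
  rw [lap_eq hu, InnerProductSpace.laplacian_eq_iteratedFDeriv_complexPlane]
  simp [iteratedFDeriv_two_apply]

theorem lap_of_harmonicAt {u : ℂ → ℝ} {z : ℂ} (hu : InnerProductSpace.HarmonicAt u z) :
    lap u z = 0 := by
  rw [lap_eq_laplacian hu.1]; exact hu.2.eq_of_nhds

theorem lap_add {u v : ℂ → ℝ} {z : ℂ} (hu : ContDiffAt ℝ 2 u z) (hv : ContDiffAt ℝ 2 v z) :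
    lap (fun w => u w + v w) z = lap u z + lap v z := by
  rw [lap_eq_laplacian hu, lap_eq_laplacian hv, lap_eq_laplacian (hu.add hv)]
  exact hu.laplacian_add hv

theorem lap_const_mul {u : ℂ → ℝ} {z : ℂ} (c : ℝ) (hu : ContDiffAt ℝ 2 u z) :
    lap (fun w => c * u w) z = c * lap u z := by
  rw [lap_eq_laplacian hu, lap_eq_laplacian (contDiffAt_const.mul hu)]
  have := InnerProductSpace.laplacian_smul c hu
  simpa [Pi.smul_def] using this

theorem lap_zero_fun (z : ℂ) : lap (fun _ => (0:ℝ)) z = 0 := by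
  simp [lap]

theorem lap_const (c : ℝ) (z : ℂ) : lap (fun _ => c) z = 0 := by
  simp [lap]

/-- continuity of the Laplacian -/
theorem lap_continuousAt {u : ℂ → ℝ} {z : ℂ} (hu : ContDiffAt ℝ 2 u z) :
    ContinuousAt (lap u) z := by
  have h1 : lap u =ᶠ[𝓝 z] fun w => fderiv ℝ (fderiv ℝ u) w 1 1 + fderiv ℝ (fderiv ℝ u) w I I := by
    filter_upwards [hu.eventually (by simp)] with w hw using lap_eq hw
  rw [continuousAt_congr h1]
  have h2 : ContinuousAt (fderiv ℝ (fderiv ℝ u)) z :=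
    ((hu.fderiv_right (m := 1) (by norm_num)).fderiv_right (m := 0) (by norm_num)).continuousAt
  have h3 : ∀ d : ℂ, ContinuousAt (fun w => fderiv ℝ (fderiv ℝ u) w d d) z := fun d =>
    (h2.clm_apply continuousAt_const).clm_apply continuousAt_const
  exact (h3 1).add (h3 I)

theorem lap_comp_holo {H : ℂ → ℝ} {f : ℂ → ℂ} {z : ℂ} (hf : AnalyticAt ℂ f z)
    (hH : ContDiffAt ℝ 2 H (f z)) :
    lap (fun w => H (f w)) z = ‖deriv f z‖ ^ 2 * lap H (f z) := by
  have hH2 := fderiv_diffAt hH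
  have hfd := hf.differentiableAt
  have hfR : HasFDerivAt f ((ContinuousLinearMap.toSpanSingleton ℂ (deriv f z)).restrictScalars ℝ) z :=
    hfd.hasDerivAt.hasFDerivAt.restrictScalars ℝ
  have hf'R : HasFDerivAt (deriv f)
      ((ContinuousLinearMap.toSpanSingleton ℂ (deriv (deriv f) z)).restrictScalars ℝ) z :=
    hf.deriv.differentiableAt.hasDerivAt.hasFDerivAt.restrictScalars ℝ
  have key : ∀ d : ℂ, fderiv ℝ (fun w => fderiv ℝ (fun w => H (f w)) w d) z d =
      fderiv ℝ (fderiv ℝ H) (f z) (deriv f z * d) (deriv f z * d)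
        + fderiv ℝ H (f z) (deriv (deriv f) z * (d * d)) := by
    intro d
    have e1 : (fun w => fderiv ℝ (fun w => H (f w)) w d) =ᶠ[𝓝 z]
        fun w => fderiv ℝ H (f w) (deriv f w * d) := by
      filter_upwards [hf.eventually_analyticAt,
        hf.continuousAt.eventually (hH.eventually (by simp))] with w h1 h2
      have h3 : HasFDerivAt f
          ((ContinuousLinearMap.toSpanSingleton ℂ (deriv f w)).restrictScalars ℝ) w :=
        h1.differentiableAt.hasDerivAt.hasFDerivAt.restrictScalars ℝ
      have h4 := ((h2.differentiableAt (by norm_num)).hasFDerivAt.comp w h3).fderiv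
      have h5 : fderiv ℝ (fun w => H (f w)) w = _ := h4
      rw [h5]; simp [mul_comm]
    rw [e1.fderiv_eq]
    have e2 : HasFDerivAt (fun w => fderiv ℝ H (f w)) _ z :=
      HasFDerivAt.comp z hH2.hasFDerivAt hfR
    have e3 := (e2.clm_apply (hf'R.mul_const d)).fderiv
    rw [e3]
    simp
    rw [mul_comm d (deriv f z), add_comm]
    congr 2
    ring
  have hs : lap (fun w => H (f w)) z = (fderiv ℝ (fun w => fderiv ℝ (fun w => H (f w)) w 1) z 1)
      + (fderiv ℝ (fun w => fderiv ℝ (fun w => H (f w)) w I) z I) := rfl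
  rw [hs, key 1, key I, lap_eq hH]
  set B := fderiv ℝ (fderiv ℝ H) (f z)
  set a := deriv f z
  have ha : a * 1 = (a.re : ℝ) • (1:ℂ) + (a.im : ℝ) • I := by
    simp [Complex.re_add_im]
  have hb : a * I = (-a.im : ℝ) • (1:ℂ) + (a.re : ℝ) • I := by
    apply Complex.ext <;> simp
  rw [ha, hb]
  have hn : ‖a‖ ^ 2 = a.re ^ 2 + a.im ^ 2 := by
    rw [Complex.sq_norm, normSq_apply]; ring
  rw [hn]
  simp only [map_add, map_smul, ContinuousLinearMap.add_apply, ContinuousLinearMap.smul_apply,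
    smul_eq_mul, mul_one, I_mul_I, mul_neg, map_neg]
  ring

theorem hasFDerivAt_normSq (w : ℂ) :
    HasFDerivAt (fun w : ℂ => normSq w) ((2 * w.re) • reCLM + (2 * w.im) • imCLM) w := by
  have h1 : HasFDerivAt (fun w : ℂ => w.re) reCLM w := reCLM.hasFDerivAt
  have h2 : HasFDerivAt (fun w : ℂ => w.im) imCLM w := imCLM.hasFDerivAt
  have := (h1.mul h1).add (h2.mul h2)
  have e : (fun w : ℂ => normSq w) = fun w => w.re * w.re + w.im * w.im := by
    ext w; exact normSq_apply w
  rw [e]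
  refine this.congr_fderiv ?_
  ext <;> simp <;> ring

theorem contDiff_normSq : ContDiff ℝ 2 (fun w : ℂ => normSq w) := by
  have e : (fun w : ℂ => normSq w) = fun w => w.re * w.re + w.im * w.im := by
    ext w; exact normSq_apply w
  rw [e]
  exact (reCLM.contDiff.mul reCLM.contDiff).add (imCLM.contDiff.mul imCLM.contDiff)

theorem lap_radial {k k1 : ℝ → ℝ} {k2 : ℝ} {w : ℂ}
    (h1 : ∀ᶠ t in 𝓝 (normSq w), HasDerivAt k (k1 t) t)
    (h2 : HasDerivAt k1 k2 (normSq w)) :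
    lap (fun w => k (normSq w)) w = 4 * (k1 (normSq w) + normSq w * k2) := by
  have hN := hasFDerivAt_normSq w
  have key : ∀ d : ℂ, fderiv ℝ (fun w => fderiv ℝ (fun w => k (normSq w)) w d) w d =
      k2 * (2 * w.re * d.re + 2 * w.im * d.im) ^ 2 + k1 (normSq w) * 2 * (d.re * d.re + d.im * d.im) := by
    intro d
    have e1 : (fun w => fderiv ℝ (fun w => k (normSq w)) w d) =ᶠ[𝓝 w]
        fun w => k1 (normSq w) * (2 * w.re * d.re + 2 * w.im * d.im) := by
      filter_upwards [hN.continuousAt.eventually h1] with v hv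
      have h5 : fderiv ℝ (fun w => k (normSq w)) v = _ :=
        (hv.comp_hasFDerivAt v (hasFDerivAt_normSq v)).fderiv
      rw [h5]; simp; ring
    rw [e1.fderiv_eq]
    have h3 : HasFDerivAt (fun w : ℂ => 2 * w.re * d.re + 2 * w.im * d.im)
        ((2 * d.re) • reCLM + (2 * d.im) • imCLM) w := by
      have := ((2 * d.re) • reCLM + (2 * d.im) • imCLM : ℂ →L[ℝ] ℝ).hasFDerivAt (x := w)
      refine this.congr_of_eventuallyEq (Eventually.of_forall fun v => ?_)
      simp; ring
    have h4 := ((h2.comp_hasFDerivAt w hN).mul h3).fderiv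
    have h5 : fderiv ℝ (fun w => k1 (normSq w) * (2 * w.re * d.re + 2 * w.im * d.im)) w = _ := h4
    rw [h5]; simp; ring
  unfold lap
  rw [key 1, key I]
  simp [normSq_apply]; ring

/-- second derivative test -/
theorem lap_nonpos_of_isLocalMax {u : ℂ → ℝ} {z : ℂ} (hu : ContDiffAt ℝ 2 u z)
    (hm : IsLocalMax u z) : lap u z ≤ 0 := by
  have key : ∀ d : ℂ, fderiv ℝ (fun w => fderiv ℝ u w d) z d ≤ 0 := by
    intro d
    by_contra hcon
    push Not at hcon
    let L : ℝ → ℂ := fun t => z + (t:ℂ) * d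
    have hL : ∀ t, HasDerivAt L d t := by
      intro t
      have := ((ofRealCLM.hasDerivAt (x := t)).mul_const d).const_add z
      simpa [L] using this
    have hL0 : L 0 = z := by simp [L]
    have hc : Tendsto L (𝓝 0) (𝓝 z) := by
      have := (hL 0).continuousAt.tendsto; rwa [hL0] at this
    have d1 : deriv (fun t => u (L t)) =ᶠ[𝓝 0] fun t => fderiv ℝ u (L t) d := by
      filter_upwards [hc.eventually (hu.eventually (by simp))] with t ht
      exact ((ht.differentiableAt (by norm_num)).hasFDerivAt.comp_hasDerivAt t (hL t)).deriv
    have hd2 : DifferentiableAt ℝ (fun w => fderiv ℝ u w d) (L 0) := by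
      rw [hL0]; exact (fderiv_diffAt hu).clm_apply (differentiableAt_const d)
    have d2 : deriv (deriv (fun t => u (L t))) 0 = fderiv ℝ (fun w => fderiv ℝ u w d) z d := by
      rw [d1.deriv_eq]
      have := (hd2.hasFDerivAt.comp_hasDerivAt 0 (hL 0)).deriv
      rw [hL0] at this
      exact this
    have hmax : IsLocalMax (fun t => u (L t)) 0 := by
      have h1 : ∀ᶠ t in 𝓝 (0:ℝ), u (L t) ≤ u z := hc.eventually hm
      filter_upwards [h1] with t ht
      rw [hL0]; exact ht
    have hmin : IsLocalMin (fun t => u (L t)) 0 := by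
      apply isLocalMin_of_deriv_deriv_pos
      · rw [d2]; exact hcon
      · exact hmax.deriv_eq_zero
      · have : ContinuousAt u (L 0) := by rw [hL0]; exact hu.continuousAt
        exact ContinuousAt.comp (f := L) this (hL 0).continuousAt
    have hconst : (fun t => u (L t)) =ᶠ[𝓝 0] fun _ => u (L 0) := by
      filter_upwards [hmin, hmax] with t h1 h2
      exact le_antisymm h2 h1
    have hdc : deriv (fun t => u (L t)) =ᶠ[𝓝 0] fun _ => (0:ℝ) := by
      filter_upwards [hconst.eventuallyEq_nhds] with t ht
      rw [ht.deriv_eq]; simp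
    have := hdc.deriv_eq
    rw [d2] at this
    simp at this
    linarith
  unfold lap
  have := key 1; have := key I
  linarith

theorem lap_normSq (z : ℂ) : lap (fun w => normSq w) z = 4 := by
  have := lap_radial (k := fun t => t) (k1 := fun _ => 1) (k2 := 0) (w := z)
    (Eventually.of_forall fun t => hasDerivAt_id t) (hasDerivAt_const _ _)
  simpa using this

/-- maximum principle -/
theorem max_principle {C V : Set ℂ} {u : ℂ → ℝ} {m : ℝ} (hC : IsCompact C) (hV : IsOpen V)
    (hVC : V ⊆ C) (hc : ContinuousOn u C) (hu : ∀ z ∈ V, ContDiffAt ℝ 2 u z)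
    (hl : ∀ z ∈ V, 0 ≤ lap u z) (hb : ∀ z ∈ C, z ∉ V → u z ≤ m) : ∀ z ∈ C, u z ≤ m := by
  intro z hz
  obtain ⟨M, hM⟩ := (hC.image (f := fun w : ℂ => normSq w) contDiff_normSq.continuous).bddAbove
  have hM' : ∀ w ∈ C, normSq w ≤ M := fun w hw => hM ⟨w, hw, rfl⟩
  have key : ∀ ε : ℝ, 0 < ε → u z ≤ m + ε * M := by
    intro ε hε
    have hcont : ContinuousOn (fun w => u w + ε * normSq w) C :=
      hc.add (continuousOn_const.mul contDiff_normSq.continuous.continuousOn)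
    obtain ⟨z0, hz0, hmax⟩ := hC.exists_isMaxOn ⟨z, hz⟩ hcont
    have hle : u z + ε * normSq z ≤ u z0 + ε * normSq z0 := hmax hz
    have hz0V : z0 ∉ V := by
      intro hV0
      have hloc : IsLocalMax (fun w => u w + ε * normSq w) z0 :=
        hmax.isLocalMax (mem_of_superset (hV.mem_nhds hV0) hVC)
      have hcd : ContDiffAt ℝ 2 (fun w : ℂ => ε * normSq w) z0 :=
        contDiffAt_const.mul contDiff_normSq.contDiffAt
      have h1 := lap_nonpos_of_isLocalMax ((hu z0 hV0).add hcd) hloc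
      have h2 : lap (fun w => u w + ε * normSq w) z0 = lap u z0 + ε * 4 := by
        rw [lap_add (hu z0 hV0) hcd, lap_const_mul ε contDiff_normSq.contDiffAt, lap_normSq]
      have h3 := hl z0 hV0
      have h1' : lap (fun w => u w + ε * normSq w) z0 ≤ 0 := h1
      linarith
    have h4 := hb z0 hz0 hz0V
    have h5 := mul_le_mul_of_nonneg_left (hM' z0 hz0) hε.le
    have h6 := mul_nonneg hε.le (normSq_nonneg z)
    linarith
  have hM0 : 0 ≤ M := (normSq_nonneg z).trans (hM' z hz)
  apply le_of_forall_pos_le_add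
  intro δ hδ
  have := key (δ / (M + 1)) (by positivity)
  have h7 : δ / (M + 1) * M ≤ δ := by
    rw [div_mul_eq_mul_div, div_le_iff₀ (by positivity)]; nlinarith
  linarith


/-- test functions -/
structure TF (Ω : Set ℂ) (χ : ℂ → ℝ) : Prop where
  cd : ContDiff ℝ 2 χ
  cs : HasCompactSupport χ
  ts : tsupport χ ⊆ Ω

theorem cmul_continuous {V : Set ℂ} {u w : ℂ → ℝ} (hV : IsOpen V) (hu : ContinuousOn u V)
    (hw : Continuous w) (ht : tsupport w ⊆ V) : Continuous fun z => u z * w z := by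
  apply continuous_of_tsupport
  intro x hx
  have hx' : x ∈ tsupport w := (tsupport_mul_subset_right (f := u) (g := w)) hx
  exact (hu.continuousAt (hV.mem_nhds (ht hx'))).mul hw.continuousAt

theorem cmul_integrable {V : Set ℂ} {u w : ℂ → ℝ} (hV : IsOpen V) (hu : ContinuousOn u V)
    (hw : Continuous w) (hc : HasCompactSupport w) (ht : tsupport w ⊆ V)
    (μ : Measure ℂ) [IsFiniteMeasureOnCompacts μ] : Integrable (fun z => u z * w z) μ :=
  (cmul_continuous hV hu hw ht).integrable_of_hasCompactSupport hc.mul_left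

theorem lap_eq_zero_of_notMem {χ : ℂ → ℝ} {z : ℂ} (hz : z ∉ tsupport χ) : lap χ z = 0 := by
  have h : χ =ᶠ[𝓝 z] fun _ => 0 := notMem_tsupport_iff_eventuallyEq.mp hz
  rw [lap_congr h, lap_zero_fun]

theorem lap_tsupport (χ : ℂ → ℝ) : tsupport (lap χ) ⊆ tsupport χ := by
  apply closure_minimal _ (isClosed_tsupport χ)
  intro z hz
  by_contra h
  exact hz (lap_eq_zero_of_notMem h)

theorem TF.lap_cont {Ω : Set ℂ} {χ : ℂ → ℝ} (h : TF Ω χ) : Continuous (lap χ) :=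
  continuous_iff_continuousAt.2 fun _ => lap_continuousAt h.cd.contDiffAt

theorem TF.lap_cs {Ω : Set ℂ} {χ : ℂ → ℝ} (h : TF Ω χ) : HasCompactSupport (lap χ) :=
  h.cs.of_isClosed_subset (isClosed_tsupport _) (lap_tsupport χ)

theorem TF.int_mul_lap {Ω : Set ℂ} {χ u : ℂ → ℝ} (h : TF Ω χ) (hΩ : IsOpen Ω)
    (hu : ContinuousOn u Ω) : Integrable (fun z => u z * lap χ z) :=
  cmul_integrable hΩ hu h.lap_cont h.lap_cs ((lap_tsupport χ).trans h.ts) volume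

theorem TF.setInt {Ω : Set ℂ} {χ u : ℂ → ℝ} (h : TF Ω χ) :
    ∫ z in Ω, u z * lap χ z = ∫ z, u z * lap χ z := by
  apply setIntegral_eq_integral_of_forall_compl_eq_zero
  intro z hz
  rw [lap_eq_zero_of_notMem (fun h2 => hz (h.ts h2)), mul_zero]

theorem TF.mono {Ω V : Set ℂ} {χ : ℂ → ℝ} (h : TF Ω χ) (hV : Ω ⊆ V) : TF V χ :=
  ⟨h.cd, h.cs, h.ts.trans hV⟩

theorem TF.add {Ω : Set ℂ} {χ η : ℂ → ℝ} (h : TF Ω χ) (h' : TF Ω η) :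
    TF Ω (fun z => χ z + η z) :=
  ⟨h.cd.add h'.cd, h.cs.add h'.cs, (tsupport_add χ η).trans (union_subset h.ts h'.ts)⟩

theorem contDiff_of_nhds_tsupport {w : ℂ → ℝ} (h : ∀ z ∈ tsupport w, ContDiffAt ℝ 2 w z) :
    ContDiff ℝ 2 w := by
  rw [contDiff_iff_contDiffAt]
  intro z
  by_cases hz : z ∈ tsupport w
  · exact h z hz
  · have h2 : w =ᶠ[𝓝 z] fun _ => 0 := notMem_tsupport_iff_eventuallyEq.mp hz
    exact contDiffAt_const.congr_of_eventuallyEq h2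

theorem TF.mul {Ω : Set ℂ} {χ g : ℂ → ℝ} (h : TF Ω χ) (hΩ : IsOpen Ω) (hg : ContDiffOn ℝ 2 g Ω) :
    TF Ω (fun z => g z * χ z) := by
  refine ⟨contDiff_of_nhds_tsupport ?_, h.cs.mul_left, (tsupport_mul_subset_right).trans h.ts⟩
  intro z hz
  have hz' := (tsupport_mul_subset_right (f := g) (g := χ)) hz
  exact (hg.contDiffAt (hΩ.mem_nhds (h.ts hz'))).mul h.cd.contDiffAt

theorem exists_cutoff {C Ω : Set ℂ} (hC : IsCompact C) (hΩ : IsOpen Ω) (h : C ⊆ Ω) :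
    ∃ χ : ℂ → ℝ, TF Ω χ ∧ (∀ z, 0 ≤ χ z ∧ χ z ≤ 1) ∧ ∀ᶠ z in 𝓝ˢ C, χ z = 1 := by
  obtain ⟨L, hL, hCL, hLΩ⟩ := exists_compact_between hC hΩ h
  obtain ⟨f, h1, h2, h3⟩ := exists_contMDiffMap_one_nhds_of_subset_interior (n := 2)
    (modelWithCornersSelf ℝ ℂ) hC.isClosed hCL
  have hs : tsupport (f : ℂ → ℝ) ⊆ L := by
    apply closure_minimal _ hL.isClosed
    intro z hz
    by_contra h
    exact hz (h2 z h)
  refine ⟨f, ⟨?_, hL.of_isClosed_subset (isClosed_tsupport _) hs, hs.trans hLΩ⟩, fun z => h3 z, h1⟩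
  have := f.contMDiff
  exact contMDiff_iff_contDiff.1 this

theorem green {V : Set ℂ} {χ u : ℂ → ℝ} (hV : IsOpen V) (h : TF V χ) (hu : ContDiffOn ℝ 2 u V) :
    ∫ z, u z * lap χ z = ∫ z, χ z * lap u z := by
  have hu' : ∀ z ∈ V, ContDiffAt ℝ 2 u z := fun z hz => hu.contDiffAt (hV.mem_nhds hz)
  have hχ1 : ∀ v, ContDiff ℝ 1 (fun z => fderiv ℝ χ z v) := fun v =>
    (h.cd.fderiv_right (m := 1) (by norm_num)).clm_apply contDiff_const
  have ts1 : ∀ v, tsupport (fun z => fderiv ℝ χ z v) ⊆ tsupport χ := fun v =>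
    (tsupport_fderiv_apply_subset ℝ v)
  have cs1 : ∀ v, HasCompactSupport (fun z => fderiv ℝ χ z v) := fun v => h.cs.fderiv_apply ℝ v
  have hχ2 : ∀ v, Continuous (fun z => fderiv ℝ (fun w => fderiv ℝ χ w v) z v) := fun v =>
    ((hχ1 v).continuous_fderiv (by norm_num)).clm_apply continuous_const
  have ts2 : ∀ v, tsupport (fun z => fderiv ℝ (fun w => fderiv ℝ χ w v) z v) ⊆ tsupport χ := fun v =>
    (tsupport_fderiv_apply_subset ℝ v).trans (ts1 v)
  have cs2 : ∀ v, HasCompactSupport (fun z => fderiv ℝ (fun w => fderiv ℝ χ w v) z v) :=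
    fun v => (cs1 v).fderiv_apply ℝ v
  have hu1 : ∀ v, ∀ z ∈ V, ContDiffAt ℝ 1 (fun z => fderiv ℝ u z v) z := fun v z hz =>
    ((hu' z hz).fderiv_right (m := 1) (by norm_num)).clm_apply contDiffAt_const
  have hu1c : ∀ v, ContinuousOn (fun z => fderiv ℝ u z v) V := fun v z hz =>
    (hu1 v z hz).continuousAt.continuousWithinAt
  have hu2c : ∀ v, ContinuousOn (fun z => fderiv ℝ (fun w => fderiv ℝ u w v) z v) V := fun v z hz =>
    ((((hu1 v z hz).fderiv_right (m := 0) (by norm_num)).clm_apply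
      contDiffAt_const).continuousAt).continuousWithinAt
  have i1 : ∀ v, Integrable (fun z => u z * fderiv ℝ (fun w => fderiv ℝ χ w v) z v) := fun v =>
    cmul_integrable hV hu.continuousOn (hχ2 v) (cs2 v) ((ts2 v).trans h.ts) volume
  have i2 : ∀ v, Integrable (fun z => fderiv ℝ u z v * fderiv ℝ χ z v) := fun v =>
    cmul_integrable hV (hu1c v) (hχ1 v).continuous (cs1 v) ((ts1 v).trans h.ts) volume
  have i3 : ∀ v, Integrable (fun z => u z * fderiv ℝ χ z v) := fun v =>
    cmul_integrable hV hu.continuousOn (hχ1 v).continuous (cs1 v) ((ts1 v).trans h.ts) volume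
  have i4 : ∀ v, Integrable (fun z => fderiv ℝ (fun w => fderiv ℝ u w v) z v * χ z) := fun v =>
    cmul_integrable hV (hu2c v) h.cd.continuous h.cs h.ts volume
  have i5 : ∀ v, Integrable (fun z => fderiv ℝ u z v * χ z) := fun v =>
    cmul_integrable hV (hu1c v) h.cd.continuous h.cs h.ts volume
  have key : ∀ v, ∫ z, u z * fderiv ℝ (fun w => fderiv ℝ χ w v) z v =
      ∫ z, fderiv ℝ (fun w => fderiv ℝ u w v) z v * χ z := by
    intro v
    rw [integral_mul_fderiv_eq_neg_fderiv_mul_of_integrable (i2 v) (i1 v) (i3 v)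
      (fun z hz => (hu' z (h.ts (ts1 v hz))).differentiableAt (by norm_num))
      (fun z _ => (hχ1 v).differentiable (by norm_num) z)]
    rw [integral_mul_fderiv_eq_neg_fderiv_mul_of_integrable (f := fun z => fderiv ℝ u z v)
      (i4 v) (i2 v) (i5 v)
      (fun z hz => (hu1 v z (h.ts hz)).differentiableAt (by norm_num))
      (fun z _ => h.cd.differentiable (by norm_num) z), neg_neg]
  have e1 : ∀ z, u z * lap χ z = u z * fderiv ℝ (fun w => fderiv ℝ χ w 1) z 1 +
      u z * fderiv ℝ (fun w => fderiv ℝ χ w I) z I := fun z => by simp only [lap]; ring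
  have e2 : ∀ z, χ z * lap u z = fderiv ℝ (fun w => fderiv ℝ u w 1) z 1 * χ z +
      fderiv ℝ (fun w => fderiv ℝ u w I) z I * χ z := fun z => by simp only [lap]; ring
  simp only [e1, e2]
  rw [integral_add (i1 1) (i1 I), integral_add (i4 1) (i4 I), key, key]

/-- integral of a Laplacian of a test function vanishes -/
theorem TF.int_lap {Ω : Set ℂ} {χ : ℂ → ℝ} (h : TF Ω χ) : ∫ z, lap χ z = 0 := by
  have := green (u := fun _ => 1) isOpen_univ (h.mono (subset_univ _)) contDiffOn_const
  simpa [lap_const] using this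


structure Conf (Ω : Set ℂ) (ψ τ : ℂ → ℂ) : Prop where
  op : IsOpen Ω
  an : ∀ w ∈ ball (0:ℂ) 1, AnalyticAt ℂ ψ w
  mp : ∀ w ∈ ball (0:ℂ) 1, ψ w ∈ Ω
  ant : ∀ z ∈ Ω, AnalyticAt ℂ τ z
  mpt : ∀ z ∈ Ω, τ z ∈ ball (0:ℂ) 1
  right : ∀ z ∈ Ω, ψ (τ z) = z
  left : ∀ w ∈ ball (0:ℂ) 1, τ (ψ w) = w

theorem exists_conf {Ω : Set ℂ} (h : AnalyticJordanDomain Ω) : ∃ ψ τ, Conf Ω ψ τ := by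
  obtain ⟨U, ψ, hU, hUb, hd, hinj, him, -⟩ := h.analyticBoundary
  have hbU : ball (0:ℂ) 1 ⊆ U := ball_subset_closedBall.trans hUb
  have an : ∀ w ∈ ball (0:ℂ) 1, AnalyticAt ℂ ψ w := fun w hw =>
    hd.analyticAt (hU.mem_nhds (hbU hw))
  have hinj' : InjOn ψ (ball (0:ℂ) 1) := hinj.mono hbU
  let τ := Function.invFunOn ψ (ball (0:ℂ) 1)
  have mp : ∀ w ∈ ball (0:ℂ) 1, ψ w ∈ Ω := fun w hw => him ▸ mem_image_of_mem _ hw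
  have left : ∀ w ∈ ball (0:ℂ) 1, τ (ψ w) = w := fun w hw =>
    hinj'.leftInvOn_invFunOn hw
  have mpt : ∀ z ∈ Ω, τ z ∈ ball (0:ℂ) 1 := by
    intro z hz
    rw [← him] at hz
    obtain ⟨w, hw, rfl⟩ := hz
    rw [left w hw]; exact hw
  have right : ∀ z ∈ Ω, ψ (τ z) = z := by
    intro z hz
    rw [← him] at hz
    obtain ⟨w, hw, rfl⟩ := hz
    rw [left w hw]
  have nonconst : ∀ w ∈ ball (0:ℂ) 1, ¬ ∀ᶠ y in 𝓝 w, ψ y = ψ w := by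
    intro w hw hc
    have h1 : ∀ᶠ y in 𝓝 w, y = w := by
      filter_upwards [hc, isOpen_ball.mem_nhds hw] with y h1 h2 using hinj' h2 hw h1
    have h2 : ∀ᶠ y in 𝓝[≠] w, y = w := h1.filter_mono nhdsWithin_le_nhds
    have h3 := (h2.and self_mem_nhdsWithin).exists
    obtain ⟨y, hy, hy'⟩ := h3
    exact hy' hy
  have contt : ∀ z ∈ Ω, ContinuousAt τ z := by
    intro z hz
    have hw := mpt z hz
    rcases (an _ hw).eventually_constant_or_nhds_le_map_nhds with h1 | h1
    · exact absurd h1 (nonconst _ hw)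
    · rw [right z hz] at h1
      intro S hS
      have h2 : ψ '' (S ∩ ball (0:ℂ) 1) ∈ 𝓝 z :=
        h1 (image_mem_map (inter_mem hS (isOpen_ball.mem_nhds hw)))
      rw [mem_map]
      filter_upwards [h2] with y hy
      obtain ⟨s, hs, rfl⟩ := hy
      show τ (ψ s) ∈ S
      rw [left s hs.2]; exact hs.1
  have dτ : ∀ z ∈ Ω, deriv ψ (τ z) ≠ 0 → DifferentiableAt ℂ τ z := by
    intro z hz h0
    exact (HasDerivAt.of_local_left_inverse (contt z hz)
      (an _ (mpt z hz)).differentiableAt.hasDerivAt h0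
      (by filter_upwards [h.isOpen.mem_nhds hz] with y hy using right y hy)).differentiableAt
  refine ⟨ψ, τ, ⟨h.isOpen, an, mp, ?_, mpt, right, left⟩⟩
  intro z hz
  apply analyticAt_of_differentiable_on_punctured_nhds_of_continuousAt _ (contt z hz)
  have hw := mpt z hz
  rcases (an _ hw).deriv.eventually_eq_zero_or_eventually_ne_zero with h1 | h1
  · exfalso
    apply nonconst _ hw
    obtain ⟨ε, hε, hb⟩ := Metric.mem_nhds_iff.1 (inter_mem h1 (isOpen_ball.mem_nhds hw))
    filter_upwards [ball_mem_nhds _ hε] with y hy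
    exact isOpen_ball.is_const_of_deriv_eq_zero (convex_ball _ _).isPreconnected
      (fun x hx => (an _ (hb hx).2).differentiableAt.differentiableWithinAt)
      (fun x hx => (hb hx).1) hy (mem_ball_self hε)
  · have h2 : Tendsto τ (𝓝[≠] z) (𝓝[≠] (τ z)) := by
      apply tendsto_nhdsWithin_of_tendsto_nhds_of_eventually_within
      · exact (contt z hz).tendsto.mono_left nhdsWithin_le_nhds
      · filter_upwards [nhdsWithin_le_nhds (h.isOpen.mem_nhds hz), self_mem_nhdsWithin] with y hy hne
        intro he
        apply hne
        have he' : τ y = τ z := he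
        have := right y hy
        rw [he', right z hz] at this
        exact this.symm
    filter_upwards [h2.eventually h1, nhdsWithin_le_nhds (h.isOpen.mem_nhds hz)] with y h3 hy
    exact dτ y hy h3

section
variable {Ω : Set ℂ} {ψ τ : ℂ → ℂ}

theorem Conf.contt (h : Conf Ω ψ τ) : ContinuousOn τ Ω := fun z hz =>
  (h.ant z hz).continuousAt.continuousWithinAt

theorem Conf.cont (h : Conf Ω ψ τ) : ContinuousOn ψ (ball 0 1) := fun z hz =>
  (h.an z hz).continuousAt.continuousWithinAt

theorem Conf.nsq (h : Conf Ω ψ τ) : ∀ z ∈ Ω, normSq (τ z) < 1 := by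
  intro z hz
  have := h.mpt z hz
  rw [mem_ball_zero_iff] at this
  rw [normSq_eq_norm_sq]
  have := norm_nonneg (τ z)
  nlinarith

theorem normSq_lt_one_iff {w : ℂ} : normSq w < 1 ↔ w ∈ ball (0:ℂ) 1 := by
  rw [mem_ball_zero_iff, normSq_eq_norm_sq, sq_lt_one_iff₀ (norm_nonneg w)]

theorem Conf.nsq_cont (h : Conf Ω ψ τ) : ContinuousOn (fun z => normSq (τ z)) Ω :=
  contDiff_normSq.continuous.comp_continuousOn h.contt

/-- compact subsets stay away from the boundary -/
theorem Conf.compact_le (h : Conf Ω ψ τ) {C : Set ℂ} (hC : IsCompact C) (hCΩ : C ⊆ Ω) :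
    ∃ a : ℝ, 0 < a ∧ a < 1 ∧ ∀ z ∈ C, normSq (τ z) < a := by
  rcases C.eq_empty_or_nonempty with rfl | hne
  · exact ⟨1/2, by norm_num, by norm_num, by simp⟩
  obtain ⟨z0, hz0, hm⟩ := hC.exists_isMaxOn hne (h.nsq_cont.mono hCΩ)
  have h1 := h.nsq z0 (hCΩ hz0)
  have h0 := normSq_nonneg (τ z0)
  refine ⟨(normSq (τ z0) + 1) / 2, by linarith, by linarith, fun z hz => ?_⟩
  have : normSq (τ z) ≤ normSq (τ z0) := hm hz
  linarith

/-- sublevel sets of |τ|² are compact -/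
theorem Conf.compact_sub (h : Conf Ω ψ τ) {b : ℝ} (hb : b < 1) :
    IsCompact {z | z ∈ Ω ∧ normSq (τ z) ≤ b} := by
  have h1 : IsCompact {w : ℂ | normSq w ≤ b} := by
    apply Metric.isCompact_of_isClosed_isBounded
    · exact isClosed_le contDiff_normSq.continuous continuous_const
    · apply isBounded_ball.subset (t := ball (0:ℂ) 1)
      intro w hw
      exact normSq_lt_one_iff.1 (lt_of_le_of_lt hw hb)
  have h2 : {w : ℂ | normSq w ≤ b} ⊆ ball (0:ℂ) 1 := fun w hw =>
    normSq_lt_one_iff.1 (lt_of_le_of_lt hw hb)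
  have h3 : {z | z ∈ Ω ∧ normSq (τ z) ≤ b} = ψ '' {w : ℂ | normSq w ≤ b} := by
    ext z
    constructor
    · rintro ⟨hz, hz2⟩
      exact ⟨τ z, hz2, h.right z hz⟩
    · rintro ⟨w, hw, rfl⟩
      refine ⟨h.mp w (h2 hw), ?_⟩
      rw [h.left w (h2 hw)]; exact hw
  rw [h3]
  exact h1.image_of_continuousOn (h.cont.mono h2)

end


section

/-- bump properties -/
structure Bmp (a b : ℝ) (β : ℝ → ℝ) : Prop where
  cont : Continuous β
  nn : ∀ t, 0 ≤ β t
  supp : ∀ t, β t ≠ 0 → a < t ∧ t < b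
  int1 : ∫ t, β t = 1

theorem exists_bmp {a b : ℝ} (h : a < b) : ∃ β, Bmp a b β := by
  let f : ContDiffBump ((a + b) / 2) := ⟨(b - a) / 4, (b - a) / 2, by linarith, by linarith⟩
  refine ⟨f.normed volume, f.continuous_normed, fun t => f.nonneg_normed t, ?_, f.integral_normed⟩
  intro t ht
  have h1 : t ∈ Function.support (f.normed volume) := ht
  rw [f.support_normed_eq, Real.ball_eq_Ioo] at h1
  have h2 : f.rOut = (b - a) / 2 := rfl
  rw [h2] at h1
  exact ⟨by linarith [h1.1], by linarith [h1.2]⟩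

variable {a b : ℝ} {β : ℝ → ℝ}

theorem Bmp.zero_of_le (h : Bmp a b β) {t : ℝ} (ht : t ≤ a) : β t = 0 := by
  by_contra hc; exact absurd (h.supp t hc).1 (not_lt.2 ht)

theorem Bmp.zero_of_ge (h : Bmp a b β) {t : ℝ} (ht : b ≤ t) : β t = 0 := by
  by_contra hc; exact absurd (h.supp t hc).2 (not_lt.2 ht)

theorem Bmp.F_low (h : Bmp a b β) (ha : 0 < a) {s : ℝ} (hs : s ≤ a) : ∫ x in (0:ℝ)..s, β x = 0 := by
  rw [intervalIntegral.integral_congr (g := fun _ => (0:ℝ))]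
  · simp
  · intro x hx
    apply h.zero_of_le
    rcases le_total 0 s with h0 | h0
    · rw [uIcc_of_le h0] at hx; exact hx.2.trans hs
    · rw [uIcc_of_ge h0] at hx; exact hx.2.trans ha.le

theorem Bmp.F_high (h : Bmp a b β) (ha : 0 < a) {s : ℝ} (hs : b ≤ s) : ∫ x in (0:ℝ)..s, β x = 1 := by
  rw [intervalIntegral.integral_eq_integral_of_support_subset, h.int1]
  intro x hx
  have := h.supp x hx
  exact ⟨by linarith, by linarith⟩

theorem Bmp.ii (h : Bmp a b β) (s t : ℝ) : IntervalIntegrable β volume s t :=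
  h.cont.intervalIntegrable _ _

theorem Bmp.F_mem (h : Bmp a b β) (ha : 0 < a) (s : ℝ) :
    0 ≤ ∫ x in (0:ℝ)..s, β x ∧ ∫ x in (0:ℝ)..s, β x ≤ 1 := by
  have hmono : ∀ s t : ℝ, s ≤ t → ∫ x in (0:ℝ)..s, β x ≤ ∫ x in (0:ℝ)..t, β x := by
    intro s t hst
    rw [← intervalIntegral.integral_add_adjacent_intervals (h.ii 0 s) (h.ii s t)]
    have := intervalIntegral.integral_nonneg (μ := volume) hst (fun x _ => h.nn x)
    linarith
  constructor
  · have := hmono (min s a) s (min_le_left _ _)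
    rwa [h.F_low ha (min_le_right _ _)] at this
  · have := hmono s (max s b) (le_max_left _ _)
    rwa [h.F_high ha (le_max_right _ _)] at this

/-- radial kernel -/
structure Rad (a1 b2 : ℝ) (β k : ℝ → ℝ) : Prop where
  cd : ContDiff ℝ 2 k
  lp : ∀ w : ℂ, lap (fun w => k (normSq w)) w = 4 * β (normSq w)
  nn : ∀ t, 0 ≤ k t
  zero : ∀ t, b2 ≤ t → k t = 0
  le : ∀ t, a1 ≤ t → t ≤ 1 → k t ≤ - Real.log t
  le' : ∀ t, t ≤ a1 → k t ≤ - Real.log a1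

theorem exists_rad {a1 b1 a2 b2 : ℝ} {β1 β2 : ℝ → ℝ} (h0 : 0 < a1) (h1 : a1 < b1) (h12 : b1 ≤ a2)
    (h2 : a2 < b2) (h3 : b2 < 1) (hβ1 : Bmp a1 b1 β1) (hβ2 : Bmp a2 b2 β2) :
    ∃ k, Rad a1 b2 (fun t => β2 t - β1 t) k := by
  have ha2 : 0 < a2 := by linarith
  set B : ℝ → ℝ := fun s => (∫ x in (0:ℝ)..s, β2 x) - ∫ x in (0:ℝ)..s, β1 x with hB
  have hBd : ∀ s, HasDerivAt B (β2 s - β1 s) s := fun s =>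
    (hβ2.cont.integral_hasStrictDerivAt 0 s).hasDerivAt.sub
      (hβ1.cont.integral_hasStrictDerivAt 0 s).hasDerivAt
  have hBc : Continuous B := continuous_iff_continuousAt.2 fun s => (hBd s).continuousAt
  have hBlow : ∀ s, s ≤ a1 → B s = 0 := fun s hs => by
    simp only [hB]; rw [hβ1.F_low h0 hs, hβ2.F_low ha2 (by linarith)]; simp
  have hBhigh : ∀ s, b2 ≤ s → B s = 0 := fun s hs => by
    simp only [hB]; rw [hβ1.F_high h0 (by linarith), hβ2.F_high ha2 hs]; simp
  have hBm : ∀ s, -1 ≤ B s ∧ B s ≤ 0 := fun s => by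
    have e1 := hβ1.F_mem h0 s
    have e2 := hβ2.F_mem ha2 s
    simp only [hB]
    rcases le_total s a2 with h | h
    · rw [hβ2.F_low ha2 h]; constructor <;> linarith
    · rw [hβ1.F_high h0 (h12.trans h)]; constructor <;> linarith
  set k1 : ℝ → ℝ := fun s => B s / s with hk1
  set k2 : ℝ → ℝ := fun s => ((β2 s - β1 s) * s - B s * 1) / s ^ 2 with hk2
  have ev0 : ∀ᶠ s in 𝓝 (0:ℝ), s ≤ a1 := by
    filter_upwards [Iio_mem_nhds h0] with s hs using le_of_lt hs
  have hk1d : ∀ s, HasDerivAt k1 (k2 s) s := by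
    intro s
    by_cases hs : s = 0
    · subst hs
      have : k1 =ᶠ[𝓝 0] fun _ => 0 := by
        filter_upwards [ev0] with s hs
        simp [hk1, hBlow s hs]
      have h5 := (hasDerivAt_const (0:ℝ) (0:ℝ)).congr_of_eventuallyEq this
      simpa [hk2] using h5
    · exact (hBd s).div (hasDerivAt_id s) hs
  have hk1c : Continuous k1 := continuous_iff_continuousAt.2 fun s => (hk1d s).continuousAt
  have hk2c : Continuous k2 := by
    rw [continuous_iff_continuousAt]
    intro s
    by_cases hs : s = 0
    · subst hs
      have : k2 =ᶠ[𝓝 0] fun _ => 0 := by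
        filter_upwards [ev0] with s hs
        simp [hk2, hBlow s hs, hβ1.zero_of_le hs, hβ2.zero_of_le (t := s) (by linarith)]
      exact continuousAt_const.congr this.symm
    · refine ContinuousAt.div ?_ (by fun_prop) (by positivity)
      have := hβ1.cont; have := hβ2.cont
      fun_prop
  set k : ℝ → ℝ := fun t => - ∫ s in t..1, k1 s with hk
  have hkd : ∀ t, HasDerivAt k (k1 t) t := by
    intro t
    have := (intervalIntegral.integral_hasDerivAt_left (hk1c.intervalIntegrable t 1)
      (hk1c.stronglyMeasurableAtFilter _ _) hk1c.continuousAt).neg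
    rw [neg_neg] at this
    exact this
  have hk1n : ∀ s, k1 s ≤ 0 := by
    intro s
    rcases le_total s 0 with h | h
    · simp [hk1, hBlow s (by linarith)]
    · exact div_nonpos_of_nonpos_of_nonneg (hBm s).2 h
  have hzero : ∀ t, b2 ≤ t → k t = 0 := by
    intro t ht
    simp only [hk]
    rw [intervalIntegral.integral_congr (g := fun _ => (0:ℝ))]
    · simp
    · intro x hx
      have : b2 ≤ x := (le_min ht h3.le).trans hx.1
      simp [hk1, hBhigh x this]
  have hle : ∀ t, a1 ≤ t → t ≤ 1 → k t ≤ - Real.log t := by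
    intro t ht ht1
    have htp : 0 < t := by linarith
    have e1 : ∫ s in t..1, -s⁻¹ = Real.log t := by
      rw [intervalIntegral.integral_neg, integral_inv_of_pos htp one_pos]; simp
    simp only [hk]
    rw [← e1]
    apply neg_le_neg
    apply intervalIntegral.integral_mono_on ht1 _ (hk1c.intervalIntegrable _ _)
    · intro x hx
      have hxp : 0 < x := lt_of_lt_of_le htp hx.1
      simp only [hk1]
      rw [div_eq_mul_inv]
      have := inv_pos.2 hxp
      nlinarith [(hBm x).1]
    · apply IntervalIntegrable.neg
      apply intervalIntegral.intervalIntegrable_inv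
      · intro x hx
        rw [uIcc_of_le ht1] at hx
        linarith [hx.1]
      · exact continuousOn_id
  refine ⟨k, ⟨?_, ?_, ?_, hzero, hle, ?_⟩⟩
  · have ek : deriv k = k1 := funext fun t => (hkd t).deriv
    have ek1 : deriv k1 = k2 := funext fun t => (hk1d t).deriv
    have : ContDiff ℝ (1 + 1) k := by
      rw [contDiff_succ_iff_deriv]
      refine ⟨fun t => (hkd t).differentiableAt, by simp, ?_⟩
      rw [ek, contDiff_one_iff_deriv]
      exact ⟨fun t => (hk1d t).differentiableAt, ek1 ▸ hk2c⟩
    exact this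
  · intro w
    rw [lap_radial (Eventually.of_forall hkd) (hk1d _)]
    congr 1
    by_cases hs : normSq w = 0
    · simp [hs, hk1, hβ1.zero_of_le h0.le, hβ2.zero_of_le ha2.le]
    · simp only [hk1, hk2]; field_simp; ring
  · intro t
    rcases le_total t 1 with h | h
    · simp only [hk]
      rw [← intervalIntegral.integral_neg]
      exact intervalIntegral.integral_nonneg h fun x _ => by linarith [hk1n x]
    · rw [hzero t (by linarith)]
  · intro t ht
    have : k t = k a1 := by
      simp only [hk]
      rw [← intervalIntegral.integral_add_adjacent_intervals (hk1c.intervalIntegrable t a1)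
        (hk1c.intervalIntegrable a1 1)]
      rw [intervalIntegral.integral_congr (a := t) (b := a1) (g := fun _ => (0:ℝ))]
      · simp
      · intro x hx
        rw [uIcc_of_le ht] at hx
        simp [hk1, hBlow x hx.2]
    rw [this]
    exact hle a1 le_rfl (by linarith)

end


theorem det_mulC (a : ℂ) :
    ((ContinuousLinearMap.toSpanSingleton ℂ a).restrictScalars ℝ : ℂ →L[ℝ] ℂ).det = ‖a‖ ^ 2 := by
  rw [ContinuousLinearMap.det, ← LinearMap.det_toMatrix basisOneI, Matrix.det_fin_two]
  simp [LinearMap.toMatrix_apply, Complex.sq_norm, normSq_apply]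

section
variable {Ω : Set ℂ} {ψ τ : ℂ → ℂ} {a1 b2 : ℝ} {β k : ℝ → ℝ}

/-- the transplanted radial test function -/
noncomputable def EE (Ω : Set ℂ) (τ : ℂ → ℂ) (k : ℝ → ℝ) : ℂ → ℝ := fun z =>
  open Classical in if z ∈ Ω then k (normSq (τ z)) else 0

theorem EE_of_mem {z : ℂ} (hz : z ∈ Ω) : EE Ω τ k z = k (normSq (τ z)) := by
  simp [EE, hz]

theorem EE_nn (hk : Rad a1 b2 β k) (z : ℂ) : 0 ≤ EE Ω τ k z := by
  unfold EE
  split_ifs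
  · exact hk.nn _
  · exact le_rfl

theorem EE_tsupport (h : Conf Ω ψ τ) (hk : Rad a1 b2 β k) (hb : b2 < 1) :
    tsupport (EE Ω τ k) ⊆ {z | z ∈ Ω ∧ normSq (τ z) ≤ b2} := by
  apply closure_minimal _ (h.compact_sub hb).isClosed
  intro z hz
  by_contra hc
  apply hz
  by_cases hzΩ : z ∈ Ω
  · rw [EE_of_mem hzΩ]
    apply hk.zero
    by_contra h2
    exact hc ⟨hzΩ, by linarith⟩
  · simp [EE, hzΩ]

theorem EE_cd (h : Conf Ω ψ τ) (hk : Rad a1 b2 β k) {z : ℂ} (hz : z ∈ Ω) :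
    ContDiffAt ℝ 2 (EE Ω τ k) z := by
  have h1 : EE Ω τ k =ᶠ[𝓝 z] fun z => k (normSq (τ z)) := by
    filter_upwards [h.op.mem_nhds hz] with y hy using EE_of_mem hy
  have h2 : ContDiffAt ℝ 2 τ z := ((h.ant z hz).contDiffAt (n := 2)).restrict_scalars ℝ
  exact (ContDiffAt.comp z hk.cd.contDiffAt
    (ContDiffAt.comp z contDiff_normSq.contDiffAt h2)).congr_of_eventuallyEq h1

theorem EE_TF (h : Conf Ω ψ τ) (hk : Rad a1 b2 β k) (hb : b2 < 1) : TF Ω (EE Ω τ k) := by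
  have ht := EE_tsupport h hk hb
  refine ⟨contDiff_of_nhds_tsupport fun z hz => EE_cd h hk (ht hz).1,
    (h.compact_sub hb).of_isClosed_subset (isClosed_tsupport _) ht, fun z hz => (ht hz).1⟩

theorem Conf.image (h : Conf Ω ψ τ) : ψ '' ball 0 1 = Ω := by
  ext z
  constructor
  · rintro ⟨w, hw, rfl⟩; exact h.mp w hw
  · intro hz; exact ⟨τ z, h.mpt z hz, h.right z hz⟩

theorem pairing (h : Conf Ω ψ τ) (hk : Rad a1 b2 β k) (hb : b2 < 1) (u : ℂ → ℝ) :
    ∫ z, u z * lap (EE Ω τ k) z = ∫ w in ball (0:ℂ) 1, u (ψ w) * (4 * β (normSq w)) := by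
  rw [← (EE_TF h hk hb).setInt, ← h.image,
    integral_image_eq_integral_abs_det_fderiv_smul (f' := fun w =>
      (ContinuousLinearMap.toSpanSingleton ℂ (deriv ψ w)).restrictScalars ℝ) volume
      measurableSet_ball]
  · apply setIntegral_congr_fun measurableSet_ball
    intro w hw
    simp only [det_mulC]
    rw [abs_of_nonneg (by positivity), ← hk.lp]
    have h1 : (fun w => EE (ψ '' ball 0 1) τ k (ψ w)) =ᶠ[𝓝 w] fun w => k (normSq w) := by
      filter_upwards [isOpen_ball.mem_nhds hw] with y hy
      rw [EE_of_mem (mem_image_of_mem _ hy), h.left y hy]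
    have h2 := lap_comp_holo (H := EE (ψ '' ball 0 1) τ k) (h.an w hw)
      (by rw [h.image]; exact EE_cd h hk (h.mp w hw))
    rw [← lap_congr h1, h2]
    simp only [smul_eq_mul]
    ring
  · intro w hw
    exact ((h.an w hw).differentiableAt.hasDerivAt.hasFDerivAt.restrictScalars ℝ).hasFDerivWithinAt
  · intro x hx y hy hxy
    have h1 := h.left x hx
    have hxy' : ψ x = ψ y := hxy
    rw [hxy', h.left y hy] at h1
    exact h1.symm

end

theorem Bmp.disc_int {a b : ℝ} {β : ℝ → ℝ} (h : Bmp a b β) (hb : b < 1) {u : ℂ → ℝ}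
    (hu : ContinuousOn u (ball 0 1)) :
    Integrable (fun w => u w * β (normSq w)) := by
  have hts : tsupport (fun w : ℂ => β (normSq w)) ⊆ {w | normSq w ≤ b} := by
    apply closure_minimal _ (isClosed_le contDiff_normSq.continuous continuous_const)
    intro w hw
    exact (h.supp _ hw).2.le
  have hsub : {w : ℂ | normSq w ≤ b} ⊆ ball 0 1 := fun w hw =>
    normSq_lt_one_iff.1 (lt_of_le_of_lt hw hb)
  have hcpt : IsCompact {w : ℂ | normSq w ≤ b} :=
    Metric.isCompact_of_isClosed_isBounded (isClosed_le contDiff_normSq.continuous continuous_const)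
      (isBounded_ball.subset hsub)
  exact cmul_integrable isOpen_ball hu (h.cont.comp contDiff_normSq.continuous)
    (hcpt.of_isClosed_subset (isClosed_tsupport _) hts) (hts.trans hsub) volume

theorem Bmp.disc_eq {a b : ℝ} {β : ℝ → ℝ} (h : Bmp a b β) (hb : b < 1) (u : ℂ → ℝ) :
    ∫ w in ball (0:ℂ) 1, u w * β (normSq w) = ∫ w, u w * β (normSq w) := by
  apply setIntegral_eq_integral_of_forall_compl_eq_zero
  intro w hw
  rw [h.zero_of_ge, mul_zero]
  by_contra hc
  exact hw (normSq_lt_one_iff.1 (by linarith))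

theorem Bmp.disc_pos {a b : ℝ} {β : ℝ → ℝ} (h : Bmp a b β) (ha : 0 < a) (hb : b < 1) :
    0 < ∫ w : ℂ, β (normSq w) := by
  have hc : Continuous (fun w : ℂ => β (normSq w)) := h.cont.comp contDiff_normSq.continuous
  have hi : Integrable (fun w : ℂ => β (normSq w)) := by
    simpa using h.disc_int hb (u := fun _ => 1) continuousOn_const
  obtain ⟨t, ht⟩ : ∃ t, β t ≠ 0 := by
    by_contra hcon
    push Not at hcon
    have := h.int1
    simp [hcon] at this
  refine hc.integral_pos_of_hasCompactSupport_nonneg_nonzero ?_ (fun w => h.nn _)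
    (x := (Real.sqrt t : ℂ)) ?_
  · apply HasCompactSupport.of_support_subset_isCompact (isCompact_closedBall (0:ℂ) 1)
    intro w hw
    exact ball_subset_closedBall (normSq_lt_one_iff.1 ((h.supp _ hw).2.trans hb))
  · have : normSq (Real.sqrt t : ℂ) = t := by
      rw [normSq_ofReal, Real.mul_self_sqrt]
      linarith [(h.supp t ht).1]
    rw [this]; exact ht

/-- the pairing for difference of bumps -/
theorem pairing2 {Ω : Set ℂ} {ψ τ : ℂ → ℂ} {a1 b1 a2 b2 : ℝ} {β1 β2 k : ℝ → ℝ} (h : Conf Ω ψ τ)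
    (hb1 : b1 < 1) (hb : b2 < 1) (hβ1 : Bmp a1 b1 β1) (hβ2 : Bmp a2 b2 β2)
    (hk : Rad a1 b2 (fun t => β2 t - β1 t) k) {u : ℂ → ℝ} (hu : ContinuousOn u Ω) :
    ∫ z, u z * lap (EE Ω τ k) z =
      4 * ((∫ w, u (ψ w) * β2 (normSq w)) - ∫ w, u (ψ w) * β1 (normSq w)) := by
  have hu' : ContinuousOn (fun w => u (ψ w)) (ball 0 1) := hu.comp h.cont h.mp
  rw [pairing h hk hb, ← hβ2.disc_eq hb (fun w => u (ψ w)), ← hβ1.disc_eq hb1 (fun w => u (ψ w)),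
    ← integral_sub (hβ2.disc_int hb hu').integrableOn (hβ1.disc_int hb1 hu').integrableOn,
    ← integral_const_mul]
  congr 1
  ext w
  ring

theorem bmp_mass {Ω : Set ℂ} {ψ τ : ℂ → ℂ} {a1 b1 a2 b2 : ℝ} {β1 β2 k : ℝ → ℝ} (h : Conf Ω ψ τ)
    (hb1 : b1 < 1) (hb : b2 < 1) (hβ1 : Bmp a1 b1 β1) (hβ2 : Bmp a2 b2 β2)
    (hk : Rad a1 b2 (fun t => β2 t - β1 t) k) :
    ∫ w : ℂ, β2 (normSq w) = ∫ w : ℂ, β1 (normSq w) := by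
  have h1 := pairing2 h hb1 hb hβ1 hβ2 hk (u := fun _ => 1) continuousOn_const
  simp only [one_mul] at h1
  rw [(EE_TF h hk hb).int_lap] at h1
  linarith


theorem tf_integrable {Ω : Set ℂ} {ν : Measure ℂ} (hν : ∀ C ⊆ Ω, IsCompact C → ν C < ⊤)
    {w : ℂ → ℝ} (hw : Continuous w) (hc : HasCompactSupport w) (ht : tsupport w ⊆ Ω) :
    Integrable w ν := by
  obtain ⟨M, hM⟩ := hc.exists_bound_of_continuous hw
  rw [← integrableOn_iff_integrable_of_support_subset (subset_tsupport w)]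
  exact Measure.integrableOn_of_bounded (hν _ ht hc).ne hw.aestronglyMeasurable
    (Eventually.of_forall hM)

/-- local finiteness of the Riesz measure -/
theorem riesz_lf {Ω : Set ℂ} {ψ τ : ℂ → ℂ} (h : Conf Ω ψ τ) {u : ℂ → ℝ} (hu : ContinuousOn u Ω)
    (hneg : ∀ z ∈ Ω, u z < 0)
    (hex : ∀ c : ℝ, c < 0 → ∃ C ⊆ Ω, IsCompact C ∧ ∀ z ∈ Ω, z ∉ C → c ≤ u z)
    {ν : Measure ℂ} (hν : IsRieszMeasure u Ω ν) {C : Set ℂ} (hC : IsCompact C) (hCΩ : C ⊆ Ω) :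
    ν C < ⊤ := by
  have hu' : ContinuousOn (fun w => u (ψ w)) (ball 0 1) := hu.comp h.cont h.mp
  -- a good test function
  obtain ⟨E, hE, hE0, hEne⟩ : ∃ E : ℂ → ℝ, TF Ω E ∧ (∀ z, 0 ≤ E z) ∧ ∫ z, u z * lap E z ≠ 0 := by
    have h0 : (0:ℂ) ∈ ball (0:ℂ) 1 := by simp
    have hcs := h.compact_sub (b := 1/2) (by norm_num)
    obtain ⟨z0, hz0, hm⟩ := hcs.exists_isMaxOn
      ⟨ψ 0, h.mp 0 h0, by rw [h.left 0 h0]; simp⟩ (hu.mono fun z hz => hz.1)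
    set δ := - u z0 with hδ
    have hδ0 : 0 < δ := by have := hneg z0 hz0.1; linarith
    obtain ⟨C', hC'Ω, hC', hC'u⟩ := hex (-δ/2) (by linarith)
    obtain ⟨a, ha0, ha1, ha⟩ := h.compact_le hC' hC'Ω
    set a2 := max a (1/2) with ha2
    have ha21 : a2 < 1 := max_lt ha1 (by norm_num)
    obtain ⟨b2, hb2, hb21⟩ := exists_between ha21
    obtain ⟨β1, hβ1⟩ := exists_bmp (a := 1/4) (b := 1/2) (by norm_num)
    obtain ⟨β2, hβ2⟩ := exists_bmp hb2
    obtain ⟨k, hk⟩ := exists_rad (by norm_num) (by norm_num) (le_max_right a (1/2)) hb2 hb21 hβ1 hβ2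
    refine ⟨EE Ω τ k, EE_TF h hk hb21, EE_nn hk, ?_⟩
    have hmass := bmp_mass h (by norm_num) hb21 hβ1 hβ2 hk
    have hpos := hβ1.disc_pos (by norm_num) (by norm_num)
    rw [pairing2 h (by norm_num) hb21 hβ1 hβ2 hk hu]
    have i1 := hβ1.disc_int (by norm_num) (u := fun _ => -δ) continuousOn_const
    have i2 := hβ2.disc_int hb21 (u := fun _ => -δ/2) continuousOn_const
    have e1 : ∫ w, u (ψ w) * β1 (normSq w) ≤ ∫ w, -δ * β1 (normSq w) := by
      apply integral_mono (hβ1.disc_int (by norm_num) hu') i1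
      intro w
      by_cases hw : β1 (normSq w) = 0
      · simp [hw]
      · have hs := hβ1.supp _ hw
        have hwb : w ∈ ball (0:ℂ) 1 := normSq_lt_one_iff.1 (by linarith)
        apply mul_le_mul_of_nonneg_right _ (hβ1.nn _)
        have : u (ψ w) ≤ u z0 := hm ⟨h.mp w hwb, by rw [h.left w hwb]; linarith⟩
        simp only [hδ]; linarith
    have e2 : ∫ w, -δ/2 * β2 (normSq w) ≤ ∫ w, u (ψ w) * β2 (normSq w) := by
      apply integral_mono i2 (hβ2.disc_int hb21 hu')
      intro w
      by_cases hw : β2 (normSq w) = 0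
      · simp [hw]
      · have hs := hβ2.supp _ hw
        have hwb : w ∈ ball (0:ℂ) 1 := normSq_lt_one_iff.1 (by linarith)
        apply mul_le_mul_of_nonneg_right _ (hβ2.nn _)
        apply hC'u _ (h.mp w hwb)
        intro hcon
        have := ha _ hcon
        rw [h.left w hwb] at this
        have := le_max_left a (1/2)
        linarith [hs.1]
    rw [integral_const_mul] at e1 e2
    rw [hmass] at e2
    set m := ∫ w : ℂ, β1 (normSq w)
    have : 0 < δ * m := mul_pos hδ0 hpos
    apply ne_of_gt
    nlinarith
  obtain ⟨χ, hχ, hχ01, hχ1⟩ := exists_cutoff hC h.op hCΩ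
  have hχC : ∀ z ∈ C, χ z = 1 := fun z hz => (hχ1.self_of_nhdsSet z hz)
  have fin : ∀ η : ℂ → ℝ, TF Ω η → (∀ z ∈ C, 1 ≤ η z) → ∫ z, u z * lap η z ≠ 0 → ν C < ⊤ := by
    intro η hη h1 hne
    have hr := hν.2 η hη.cd hη.cs hη.ts
    rw [hη.setInt] at hr
    have hint : Integrable η ν := by
      by_contra hcon
      rw [integral_undef hcon] at hr
      apply hne
      linarith
    refine lt_of_le_of_lt (measure_mono ?_) (hint.measure_ge_lt_top one_pos)
    exact h1
  by_cases hz : ∫ z, u z * lap χ z = 0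
  · apply fin _ (hχ.add hE)
    · intro z hz
      rw [hχC z hz]; linarith [hE0 z]
    · have : ∫ z, u z * lap (fun z => χ z + E z) z = (∫ z, u z * lap χ z) + ∫ z, u z * lap E z := by
        rw [← integral_add (hχ.int_mul_lap h.op hu) (hE.int_mul_lap h.op hu)]
        congr 1
        ext z
        rw [lap_add hχ.cd.contDiffAt hE.cd.contDiffAt, mul_add]
      rw [this, hz, zero_add]; exact hEne
  · exact fin χ hχ (fun z hz => (hχC z hz).ge) hz

/-- the Riesz measure does not charge the set of harmonicity -/
theorem riesz_null {Ω V : Set ℂ} {u : ℂ → ℝ} {ν : Measure ℂ} (hν : IsRieszMeasure u Ω ν)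
    (hfin : ∀ C ⊆ Ω, IsCompact C → ν C < ⊤) (hV : IsOpen V) (hVΩ : V ⊆ Ω)
    (hu : HarmonicOn u V) : ν V = 0 := by
  apply measure_null_of_locally_null
  intro z hz
  obtain ⟨ε, hε, hb⟩ := Metric.nhds_basis_closedBall.mem_iff.1 (hV.mem_nhds hz)
  refine ⟨closedBall z ε, mem_nhdsWithin_of_mem_nhds (closedBall_mem_nhds z hε), ?_⟩
  obtain ⟨χ, hχ, hχ01, hχ1⟩ := exists_cutoff (isCompact_closedBall z ε) hV hb
  have hr := hν.2 χ hχ.cd hχ.cs (hχ.ts.trans hVΩ)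
  rw [(hχ.mono hVΩ).setInt, green hV hχ hu.1] at hr
  have h0 : ∀ z, χ z * lap u z = 0 := by
    intro y
    by_cases hy : y ∈ V
    · rw [hu.2 y hy, mul_zero]
    · rw [image_eq_zero_of_notMem_tsupport (fun h => hy (hχ.ts h)), zero_mul]
  simp only [h0, integral_zero, mul_zero] at hr
  have hint := tf_integrable hfin hχ.cd.continuous hχ.cs (hχ.ts.trans hVΩ)
  rw [integral_eq_zero_iff_of_nonneg (fun y => (hχ01 y).1) hint] at hr
  have h1 : ν {y | ¬ χ y = (0 : ℂ → ℝ) y} = 0 := hr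
  refine measure_mono_null ?_ h1
  intro y hy
  have := hχ1.self_of_nhdsSet y hy
  simp [this]


structure Dat (Ω K : Set ℂ) (ψ τ : ℂ → ℂ) (φ : ℂ → ℝ) (m : ℝ) : Prop where
  conf : Conf Ω ψ τ
  ex : IsExhaustion φ Ω
  hK : IsCompact K
  hKΩ : K ⊆ Ω
  harm : HarmonicOn φ (Ω \ K)
  hm : m < 0
  hKm : ∀ z ∈ K, φ z ≤ m

theorem exists_dat {Ω K : Set ℂ} {φ : ℂ → ℝ} (hΩ : AnalyticJordanDomain Ω)
    (hφ : IsExhaustion φ Ω) (hK : IsCompact K) (hKΩ : K ⊆ Ω) (hharm : HarmonicOn φ (Ω \ K)) :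
    ∃ ψ τ m, Dat Ω K ψ τ φ m := by
  obtain ⟨ψ, τ, hc⟩ := exists_conf hΩ
  rcases K.eq_empty_or_nonempty with rfl | hne
  · exact ⟨ψ, τ, -1, hc, hφ, hK, hKΩ, hharm, by norm_num, by simp⟩
  · obtain ⟨z0, hz0, hm⟩ := hK.exists_isMaxOn hne (hφ.subh.1.mono hKΩ)
    exact ⟨ψ, τ, φ z0, hc, hφ, hK, hKΩ, hharm, hφ.neg z0 (hKΩ hz0), fun z hz => hm hz⟩

section
variable {Ω K : Set ℂ} {ψ τ : ℂ → ℂ} {φ : ℂ → ℝ} {m r : ℝ} {ν νr : Measure ℂ}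

theorem Dat.hex (D : Dat Ω K ψ τ φ m) (c : ℝ) (hc : c < 0) :
    ∃ C ⊆ Ω, IsCompact C ∧ ∀ z ∈ Ω, z ∉ C → c ≤ φ z := by
  obtain ⟨h1, h2⟩ := D.ex.exh c hc
  refine ⟨_, h2, h1, fun z hz hz2 => ?_⟩
  by_contra h
  exact hz2 (subset_closure ⟨hz, by linarith⟩)

theorem Dat.lf (D : Dat Ω K ψ τ φ m) (hν : IsRieszMeasure φ Ω ν) :
    ∀ C ⊆ Ω, IsCompact C → ν C < ⊤ := fun _ hC hc =>
  riesz_lf D.conf D.ex.subh.1 D.ex.neg D.hex hν hc hC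

theorem Dat.contr (D : Dat Ω K ψ τ φ m) (r : ℝ) : ContinuousOn (fun z => max (φ z) r) Ω :=
  D.ex.subh.1.sup continuousOn_const

theorem Dat.lfr (D : Dat Ω K ψ τ φ m) (hr : r < 0)
    (hν : IsRieszMeasure (fun z => max (φ z) r) Ω νr) :
    ∀ C ⊆ Ω, IsCompact C → νr C < ⊤ := fun _ hC hc =>
  riesz_lf D.conf (D.contr r) (fun z hz => max_lt (D.ex.neg z hz) hr)
    (fun c h => by
      obtain ⟨C, h1, h2, h3⟩ := D.hex c h
      exact ⟨C, h1, h2, fun z hz hz2 => (h3 z hz hz2).trans (le_max_left _ _)⟩) hν hc hC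

theorem Dat.nullK (D : Dat Ω K ψ τ φ m) (hν : IsRieszMeasure φ Ω ν) : ν Kᶜ = 0 := by
  have h1 := riesz_null hν (D.lf hν) (D.conf.op.sdiff D.hK.isClosed) sdiff_subset D.harm
  refine measure_mono_null ?_ (measure_union_null h1 hν.1)
  intro z hz
  by_cases h : z ∈ Ω
  · exact Or.inl ⟨h, hz⟩
  · exact Or.inr h

theorem Dat.nullr (D : Dat Ω K ψ τ φ m) (hm : m < r) (hr : r < 0)
    (hν : IsRieszMeasure (fun z => max (φ z) r) Ω νr) : νr {z | z ∈ Ω ∧ φ z ≤ r}ᶜ = 0 := by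
  have hVo : IsOpen (Ω ∩ φ ⁻¹' Ioi r) := D.ex.subh.1.isOpen_inter_preimage D.conf.op isOpen_Ioi
  have hVK : Ω ∩ φ ⁻¹' Ioi r ⊆ Ω \ K := by
    rintro z ⟨hz, hz2⟩
    refine ⟨hz, fun hzK => ?_⟩
    have h1 := D.hKm z hzK
    have h2 : r < φ z := hz2
    linarith
  have hee : ∀ z ∈ Ω ∩ φ ⁻¹' Ioi r, (fun z => max (φ z) r) =ᶠ[𝓝 z] φ := by
    intro z hz
    filter_upwards [hVo.mem_nhds hz] with y hy
    have h2 : r < φ y := hy.2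
    exact max_eq_left h2.le
  have h1 := riesz_null hν (D.lfr hr hν) hVo inter_subset_left ⟨fun z hz => by
      have h3 := (D.harm.1.contDiffAt ((D.conf.op.sdiff D.hK.isClosed).mem_nhds (hVK hz)))
      exact (h3.congr_of_eventuallyEq (hee z hz)).contDiffWithinAt,
    fun z hz => by rw [lap_congr (hee z hz)]; exact D.harm.2 z (hVK hz)⟩
  refine measure_mono_null ?_ (measure_union_null h1 hν.1)
  intro z hz
  by_cases h : z ∈ Ω
  · exact Or.inl ⟨h, by by_contra hc; exact hz ⟨h, not_lt.1 hc⟩⟩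
  · exact Or.inr h

theorem Dat.ma (D : Dat Ω K ψ τ φ m) (hν : IsRieszMeasure φ Ω ν) (hm : m < r)
    {μ : Measure ℂ} (h : IsMAMeasure φ Ω ν r μ) : IsRieszMeasure (fun z => max (φ z) r) Ω μ := by
  obtain ⟨νr, h1, rfl⟩ := h
  have : ν.restrict {z | z ∈ Ω ∧ r ≤ φ z} = 0 := by
    rw [Measure.restrict_eq_zero]
    refine measure_mono_null ?_ (D.nullK hν)
    rintro z ⟨hz, hz2⟩ hzK
    have := D.hKm z hzK
    linarith
  rw [this, Measure.sub_zero]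
  exact h1

/-- Jensen–Lelong -/
theorem Dat.jl (D : Dat Ω K ψ τ φ m) (hν : IsRieszMeasure φ Ω ν) (hm : m < r) (hr : r < 0)
    (hνr : IsRieszMeasure (fun z => max (φ z) r) Ω νr) {g : ℂ → ℝ} (hg : ContDiffOn ℝ 2 g Ω) :
    Integrable g νr ∧ Integrable g ν ∧
    IntegrableOn (fun z => (max (φ z) r - φ z) * lap g z) Ω ∧
    ∫ z, g z ∂νr = (∫ z, g z ∂ν) + 4⁻¹ * ∫ z in Ω, (max (φ z) r - φ z) * lap g z := by
  obtain ⟨hc1, hc2⟩ := D.ex.exh (r / 2) (by linarith)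
  set Cr := closure {z | z ∈ Ω ∧ φ z < r / 2} with hCr
  have hsub : ∀ z ∈ Ω, φ z ≤ r → z ∈ Cr := fun z hz h => subset_closure ⟨hz, by linarith⟩
  obtain ⟨χ, hχ, hχ01, hχ1⟩ := exists_cutoff (hc1.union D.hK) D.conf.op (union_subset hc2 D.hKΩ)
  have hχC : ∀ z ∈ Cr ∪ K, χ z = 1 := fun z hz => (hχ1.self_of_nhdsSet z hz)
  have hT := hχ.mul D.conf.op hg
  have i1 := tf_integrable (D.lfr hr hνr) hT.cd.continuous hT.cs hT.ts
  have i2 := tf_integrable (D.lf hν) hT.cd.continuous hT.cs hT.ts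
  have ae1 : (fun z => g z * χ z) =ᵐ[νr] g := by
    have := D.nullr hm hr hνr
    filter_upwards [(compl_mem_ae_iff.2 this)] with z hz
    rw [compl_compl] at hz
    rw [hχC z (Or.inl (hsub z hz.1 hz.2)), mul_one]
  have ae2 : (fun z => g z * χ z) =ᵐ[ν] g := by
    filter_upwards [(compl_mem_ae_iff.2 (D.nullK hν))] with z hz
    rw [compl_compl] at hz
    rw [hχC z (Or.inr hz), mul_one]
  have e1 := hνr.2 _ hT.cd hT.cs hT.ts
  have e2 := hν.2 _ hT.cd hT.cs hT.ts
  rw [integral_congr_ae ae1] at e1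
  rw [integral_congr_ae ae2] at e2
  have j1 := (hT.int_mul_lap D.conf.op (D.contr r)).integrableOn (s := Ω)
  have j2 := (hT.int_mul_lap D.conf.op D.ex.subh.1).integrableOn (s := Ω)
  have hEq : EqOn (fun z => max (φ z) r * lap (fun z => g z * χ z) z - φ z * lap (fun z => g z * χ z) z)
      (fun z => (max (φ z) r - φ z) * lap g z) Ω := by
    intro z hz
    simp only
    rcases le_or_gt (φ z) r with h | h
    · have : (fun z => g z * χ z) =ᶠ[𝓝 z] g := by
        have h5 := Filter.Eventually.filter_mono
          (nhds_le_nhdsSet (s := Cr ∪ K) (Or.inl (hsub z hz h))) hχ1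
        filter_upwards [h5] with y hy
        rw [hy, mul_one]
      rw [lap_congr this]; ring
    · rw [max_eq_left h.le]; ring
  have j3 : IntegrableOn (fun z => (max (φ z) r - φ z) * lap g z) Ω :=
    (j1.sub j2).congr_fun hEq D.conf.op.measurableSet
  refine ⟨i1.congr ae1, i2.congr ae2, j3, ?_⟩
  rw [e1, e2, ← setIntegral_congr_fun D.conf.op.measurableSet hEq, integral_sub j1 j2]
  ring

/-- the easy direction -/
theorem Dat.easy (D : Dat Ω K ψ τ φ m) (hν : IsRieszMeasure φ Ω ν) {p : ℝ} {f : ℂ → ℂ}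
    {μfam : ℝ → Measure ℂ} (hμ : ∀ r : ℝ, r < 0 → IsMAMeasure φ Ω ν r (μfam r))
    {h : ℂ → ℝ} (hh : HarmonicOn h Ω) (hf : ∀ z ∈ Ω, ‖f z‖ ^ p ≤ h z) :
    psNormPow p μfam f < ⊤ := by
  have key : ∀ᶠ r in nhdsWithin 0 (Set.Iio 0),
      ∫⁻ z, ENNReal.ofReal (‖f z‖ ^ p) ∂(μfam r) ≤ ENNReal.ofReal (∫ z, h z ∂ν) := by
    filter_upwards [Ioo_mem_nhdsLT D.hm] with r hr
    have hR := D.ma hν hr.1 (hμ r hr.2)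
    obtain ⟨i1, i2, -, e⟩ := D.jl hν hr.1 hr.2 hR hh.1
    have hz : ∫ z in Ω, (max (φ z) r - φ z) * lap h z = 0 := by
      rw [setIntegral_congr_fun D.conf.op.measurableSet (g := fun _ => (0:ℝ))]
      · simp
      · intro z hz
        simp only
        rw [hh.2 z hz, mul_zero]
    rw [hz, mul_zero, add_zero] at e
    rw [← e]
    have haeΩ : ∀ᵐ z ∂(μfam r), z ∈ Ω := mem_ae_iff.2 hR.1
    have hnn : 0 ≤ᵐ[μfam r] h := by
      filter_upwards [haeΩ] with z hz
      exact (Real.rpow_nonneg (norm_nonneg _) _).trans (hf z hz)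
    rw [ofReal_integral_eq_lintegral_ofReal i1 hnn]
    apply lintegral_mono_ae
    filter_upwards [haeΩ] with z hz
    exact ENNReal.ofReal_le_ofReal (hf z hz)
  exact lt_of_le_of_lt (limsup_le_of_le (by isBoundedDefault) key) ENNReal.ofReal_lt_top

end


section
variable {Ω K : Set ℂ} {ψ τ : ℂ → ℂ} {φ : ℂ → ℝ} {m : ℝ} {ν : Measure ℂ}

theorem Dat.hopf (D : Dat Ω K ψ τ φ m) : ∃ a c : ℝ, 0 < a ∧ a < 1 ∧ 0 < c ∧
    (∀ z ∈ Ω, a ≤ normSq (τ z) → φ z ≤ c * Real.log (normSq (τ z))) ∧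
    (∀ z ∈ Ω, normSq (τ z) ≤ a → φ z ≤ c * Real.log a) := by
  obtain ⟨a, ha0, ha1, haK⟩ := D.conf.compact_le D.hK D.hKΩ
  have hcs := D.conf.compact_sub ha1
  have h0 : (0:ℂ) ∈ ball (0:ℂ) 1 := by simp
  obtain ⟨z0, hz0, hmx⟩ := hcs.exists_isMaxOn
      ⟨ψ 0, D.conf.mp 0 h0, by rw [D.conf.left 0 h0]; simpa using ha0.le⟩
      (D.ex.subh.1.mono fun z hz => hz.1)
  have hδ := D.ex.neg z0 hz0.1
  have hla : Real.log a < 0 := Real.log_neg ha0 ha1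
  set c := φ z0 / Real.log a with hc
  have hc0 : 0 < c := div_pos_of_neg_of_neg hδ hla
  have hca : c * Real.log a = φ z0 := div_mul_cancel₀ _ hla.ne
  have hlow : ∀ z ∈ Ω, normSq (τ z) ≤ a → φ z ≤ c * Real.log a := by
    intro z hz h
    rw [hca]; exact hmx ⟨hz, h⟩
  refine ⟨a, c, ha0, ha1, hc0, ?_, hlow⟩
  intro z hz hza
  have hz1 := D.conf.nsq z hz
  have hlog : ∀ w : ℂ, Real.log (normSq w) = 2 * Real.log ‖w‖ := by
    intro w
    rw [normSq_eq_norm_sq, Real.log_pow]; norm_num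
  have key : ∀ b : ℝ, normSq (τ z) < b → b < 1 →
      φ z + (-2 * c) * Real.log ‖τ z‖ ≤ - c * Real.log b := by
    intro b hb hb1
    have hnc := D.conf.nsq_cont
    have hC : IsCompact {z | (z ∈ Ω ∧ normSq (τ z) ≤ b) ∧ a ≤ normSq (τ z)} := by
      have h1 := D.conf.compact_sub hb1
      have h2 : IsClosed ({z | z ∈ Ω ∧ normSq (τ z) ≤ b} ∩ (fun z => normSq (τ z)) ⁻¹' Ici a) :=
        (hnc.mono fun z hz => hz.1).preimage_isClosed_of_isClosed h1.isClosed isClosed_Ici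
      exact h1.of_isClosed_subset h2 inter_subset_left
    have hV : IsOpen (Ω ∩ (fun z => normSq (τ z)) ⁻¹' Ioo a b) :=
      hnc.isOpen_inter_preimage D.conf.op isOpen_Ioo
    have hVK : ∀ y ∈ Ω ∩ (fun z => normSq (τ z)) ⁻¹' Ioo a b, y ∈ Ω \ K := by
      rintro y ⟨hy, hy2⟩
      exact ⟨hy, fun hyK => absurd (haK y hyK) (not_lt.2 hy2.1.le)⟩
    have hne : ∀ y, a ≤ normSq (τ y) → τ y ≠ 0 := by
      intro y hy h
      rw [h] at hy; simp at hy; linarith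
    have hh1 : ∀ y ∈ Ω, a ≤ normSq (τ y) →
        InnerProductSpace.HarmonicAt (fun z => Real.log ‖τ z‖) y := fun y hy hy2 =>
      (D.conf.ant y hy).harmonicAt_log_norm (hne y hy2)
    have hφ2 : ∀ y ∈ Ω ∩ (fun z => normSq (τ z)) ⁻¹' Ioo a b, ContDiffAt ℝ 2 φ y := fun y hy =>
      D.harm.1.contDiffAt ((D.conf.op.sdiff D.hK.isClosed).mem_nhds (hVK y hy))
    refine max_principle (u := fun z => φ z + (-2 * c) * Real.log ‖τ z‖) hC hV ?_ ?_ ?_ ?_ ?_ z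
      ⟨⟨hz, hb.le⟩, hza⟩
    · rintro y ⟨hy, hy2⟩
      exact ⟨⟨hy, hy2.2.le⟩, hy2.1.le⟩
    · refine (D.ex.subh.1.mono fun z hz => hz.1.1).add (continuousOn_const.mul ?_)
      intro y hy
      exact ((hh1 y hy.1.1 hy.2).1.continuousAt).continuousWithinAt
    · intro y hy
      exact (hφ2 y hy).add (contDiffAt_const.mul (hh1 y hy.1 hy.2.1.le).1)
    · intro y hy
      rw [lap_add (hφ2 y hy) (contDiffAt_const.mul (hh1 y hy.1 hy.2.1.le).1),
        lap_const_mul _ (hh1 y hy.1 hy.2.1.le).1, lap_of_harmonicAt (hh1 y hy.1 hy.2.1.le),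
        D.harm.2 y (hVK y hy)]
      simp
    · rintro y ⟨⟨hy, hyb⟩, hya⟩ hyV
      have e : (-2 * c) * Real.log ‖τ y‖ = - c * Real.log (normSq (τ y)) := by rw [hlog]; ring
      simp only [e]
      rcases eq_or_lt_of_le hya with h | h
      · have h1 := hlow y hy h.symm.le
        rw [← h]
        have h2 : Real.log b < 0 := Real.log_neg (by linarith) hb1
        nlinarith
      · rcases eq_or_lt_of_le hyb with h' | h'
        · rw [h']
          linarith [D.ex.neg y hy]
        · exact absurd ⟨hy, h, h'⟩ hyV
  have hlim : Tendsto (fun b => - c * Real.log b) (𝓝[<] 1) (𝓝 (- c * Real.log 1)) :=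
    ((continuousAt_const.mul (Real.continuousAt_log one_ne_zero)).tendsto).mono_left
      nhdsWithin_le_nhds
  have hfin := ge_of_tendsto hlim (b := φ z + (-2 * c) * Real.log ‖τ z‖) (by
    filter_upwards [Ioo_mem_nhdsLT hz1] with b hb using key b hb.1 hb.2)
  rw [hlog]
  rw [Real.log_one, mul_zero] at hfin
  linarith

/-- smooth subharmonic substitute of |f|^p -/
noncomputable def gg (q : ℝ) (f : ℂ → ℂ) : ℂ → ℝ := fun z => (1 + normSq (f z)) ^ q

theorem gH_cd (q : ℝ) (w : ℂ) : ContDiffAt ℝ 2 (fun w : ℂ => (1 + normSq w) ^ q) w := by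
  apply ContDiffAt.rpow_const_of_ne
  · exact contDiffAt_const.add contDiff_normSq.contDiffAt
  · have := normSq_nonneg w; linarith

theorem gH_lap {q : ℝ} (hq : 0 < q) (w : ℂ) : 0 ≤ lap (fun w : ℂ => (1 + normSq w) ^ q) w := by
  have ht := normSq_nonneg w
  have hd : ∀ q t : ℝ, -1 < t → HasDerivAt (fun t : ℝ => (1 + t) ^ q) (q * (1 + t) ^ (q - 1)) t := by
    intro q t ht
    have := ((hasDerivAt_id t).const_add 1).rpow_const (p := q) (Or.inl (by simp; linarith))
    simpa using this
  rw [lap_radial (k := fun t => (1 + t) ^ q) (k1 := fun t => q * (1 + t) ^ (q - 1))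
    (k2 := q * ((q - 1) * (1 + normSq w) ^ (q - 1 - 1)))]
  · have h1 : 0 < 1 + normSq w := by linarith
    have e : (1 + normSq w) ^ (q - 1) = (1 + normSq w) ^ (q - 1 - 1) * (1 + normSq w) := by
      rw [← Real.rpow_add_one h1.ne']; congr 1; ring
    rw [e]
    have h2 := Real.rpow_pos_of_pos h1 (q - 1 - 1)
    set s := (1 + normSq w) ^ (q - 1 - 1)
    have : q * (s * (1 + normSq w)) + normSq w * (q * ((q - 1) * s)) = q * s * (1 + q * normSq w) := by
      ring
    rw [this]; positivity
  · filter_upwards [lt_mem_nhds (show -1 < normSq w by linarith)] with t ht using hd q t ht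
  · exact (hd (q - 1) _ (by linarith)).const_mul q

theorem gg_cd {q : ℝ} {f : ℂ → ℂ} {z : ℂ} (hf : AnalyticAt ℂ f z) : ContDiffAt ℝ 2 (gg q f) z :=
  ContDiffAt.comp z (gH_cd q (f z)) ((hf.contDiffAt (n := 2)).restrict_scalars ℝ)

theorem gg_lap {q : ℝ} (hq : 0 < q) {f : ℂ → ℂ} {z : ℂ} (hf : AnalyticAt ℂ f z) :
    0 ≤ lap (gg q f) z := by
  have : lap (gg q f) z = ‖deriv f z‖ ^ 2 * lap (fun w : ℂ => (1 + normSq w) ^ q) (f z) :=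
    lap_comp_holo (H := fun w : ℂ => (1 + normSq w) ^ q) hf (gH_cd q (f z))
  rw [this]
  exact mul_nonneg (by positivity) (gH_lap hq _)

theorem gg_ge {p : ℝ} (hp : 0 < p) (f : ℂ → ℂ) (z : ℂ) : ‖f z‖ ^ p ≤ gg (p / 2) f z := by
  unfold gg
  have : ‖f z‖ ^ p = (‖f z‖ ^ 2) ^ (p / 2) := by
    rw [← Real.rpow_natCast, ← Real.rpow_mul (norm_nonneg _)]; congr 1; push_cast; ring
  rw [this, normSq_eq_norm_sq]
  exact Real.rpow_le_rpow (by positivity) (by linarith) (by positivity)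

theorem gg_le {p : ℝ} (hp : 0 < p) (f : ℂ → ℂ) (z : ℂ) :
    gg (p / 2) f z ≤ 2 ^ (p / 2) * (1 + ‖f z‖ ^ p) := by
  unfold gg
  have e : ‖f z‖ ^ p = (‖f z‖ ^ 2) ^ (p / 2) := by
    rw [← Real.rpow_natCast, ← Real.rpow_mul (norm_nonneg _)]; congr 1; push_cast; ring
  rw [e, normSq_eq_norm_sq]
  set x := ‖f z‖ ^ 2
  have hx : 0 ≤ x := by positivity
  have h2 : (0:ℝ) < 2 ^ (p / 2) := by positivity
  rcases le_total x 1 with h | h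
  · have h1 : (1 + x) ^ (p / 2) ≤ 2 ^ (p / 2) :=
      Real.rpow_le_rpow (by positivity) (by linarith) (by positivity)
    have : 0 ≤ x ^ (p / 2) := by positivity
    nlinarith
  · have h1 : (1 + x) ^ (p / 2) ≤ (2 * x) ^ (p / 2) :=
      Real.rpow_le_rpow (by positivity) (by linarith) (by positivity)
    rw [Real.mul_rpow (by norm_num) hx] at h1
    nlinarith

theorem gg_nn (q : ℝ) (f : ℂ → ℂ) (z : ℂ) : 0 ≤ gg q f z := by
  unfold gg
  have := normSq_nonneg (f z)
  positivity

end


section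
variable {Ω K : Set ℂ} {ψ τ : ℂ → ℂ} {φ : ℂ → ℝ} {m : ℝ} {ν : Measure ℂ}

theorem Dat.gbound (D : Dat Ω K ψ τ φ m) (hν : IsRieszMeasure φ Ω ν) {p : ℝ} (hp : 0 < p)
    {f : ℂ → ℂ} (hf : DifferentiableOn ℂ f Ω)
    {μfam : ℝ → Measure ℂ} (hμ : ∀ r : ℝ, r < 0 → IsMAMeasure φ Ω ν r (μfam r))
    (hfin : psNormPow p μfam f < ⊤) :
    ∃ C : ℝ, 0 ≤ C ∧ ∀ᶠ r in 𝓝[<] (0:ℝ),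
      IntegrableOn (fun z => (max (φ z) r - φ z) * lap (gg (p/2) f) z) Ω ∧
      ∫ z in Ω, (max (φ z) r - φ z) * lap (gg (p/2) f) z ≤ C := by
  have hfa : ∀ z ∈ Ω, AnalyticAt ℂ f z := fun z hz => hf.analyticAt (D.conf.op.mem_nhds hz)
  have hg : ContDiffOn ℝ 2 (gg (p/2) f) Ω := fun z hz => (gg_cd (hfa z hz)).contDiffWithinAt
  obtain ⟨A, hA1, hA2⟩ := exists_between hfin
  have hev := eventually_lt_of_limsup_lt hA1 (by isBoundedDefault)
  set N := ∫ z, (1:ℝ) ∂ν with hN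
  set B := ENNReal.ofReal (2 ^ (p/2)) * (ENNReal.ofReal N + A) with hB
  have hBt : B < ⊤ := ENNReal.mul_lt_top ENNReal.ofReal_lt_top
    (ENNReal.add_lt_top.2 ⟨ENNReal.ofReal_lt_top, hA2⟩)
  refine ⟨4 * B.toReal, by positivity, ?_⟩
  filter_upwards [hev, Ioo_mem_nhdsLT D.hm] with r hr1 hr
  have hR := D.ma hν hr.1 (hμ r hr.2)
  obtain ⟨i1, i2, i3, e⟩ := D.jl hν hr.1 hr.2 hR hg
  obtain ⟨j1, -, -, e'⟩ := D.jl (g := fun _ => 1) hν hr.1 hr.2 hR contDiffOn_const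
  refine ⟨i3, ?_⟩
  have hmass : μfam r univ = ENNReal.ofReal N := by
    simp only [lap_const, mul_zero, integral_zero, add_zero] at e'
    rw [hN, ← e', ofReal_integral_eq_lintegral_ofReal j1 (by filter_upwards with z; simp)]
    simp
  have hle : ∫⁻ z, ENNReal.ofReal (gg (p/2) f z) ∂(μfam r) ≤ B := by
    calc ∫⁻ z, ENNReal.ofReal (gg (p/2) f z) ∂(μfam r)
        ≤ ∫⁻ z, ENNReal.ofReal (2 ^ (p/2)) * (1 + ENNReal.ofReal (‖f z‖ ^ p)) ∂(μfam r) := by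
          apply lintegral_mono
          intro z
          refine (ENNReal.ofReal_le_ofReal (gg_le hp f z)).trans ?_
          have h0 : 0 ≤ ‖f z‖ ^ p := Real.rpow_nonneg (norm_nonneg _) _
          rw [ENNReal.ofReal_mul (by positivity), ENNReal.ofReal_add zero_le_one h0,
            ENNReal.ofReal_one]
      _ = ENNReal.ofReal (2 ^ (p/2)) * (μfam r univ + ∫⁻ z, ENNReal.ofReal (‖f z‖ ^ p) ∂(μfam r)) := by
          rw [lintegral_const_mul' _ _ ENNReal.ofReal_ne_top, lintegral_add_left measurable_const]
          simp
      _ ≤ B := by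
          rw [hmass, hB]
          gcongr
  have h5 : ∫ z, gg (p/2) f z ∂(μfam r) ≤ B.toReal := by
    rw [integral_eq_lintegral_of_nonneg_ae (Eventually.of_forall (gg_nn _ f)) i1.1]
    exact ENNReal.toReal_mono hBt.ne hle
  have h6 : 0 ≤ ∫ z, gg (p/2) f z ∂ν := integral_nonneg (gg_nn _ f)
  linarith

theorem Dat.bound (D : Dat Ω K ψ τ φ m) (hν : IsRieszMeasure φ Ω ν) {p : ℝ} (hp : 0 < p)
    {f : ℂ → ℂ} (hf : DifferentiableOn ℂ f Ω)
    {μfam : ℝ → Measure ℂ} (hμ : ∀ r : ℝ, r < 0 → IsMAMeasure φ Ω ν r (μfam r))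
    (hfin : psNormPow p μfam f < ⊤) :
    ∃ b1 C m0 : ℝ, 0 < b1 ∧ b1 < 1 ∧ 0 < m0 ∧ ∀ a2 b2 β2, b1 ≤ a2 → a2 < b2 → b2 < 1 → Bmp a2 b2 β2 →
      ∫ w, gg (p/2) f (ψ w) * β2 (normSq w) ≤ C ∧ ∫ w : ℂ, β2 (normSq w) = m0 := by
  have hfa : ∀ z ∈ Ω, AnalyticAt ℂ f z := fun z hz => hf.analyticAt (D.conf.op.mem_nhds hz)
  have hg : ContDiffOn ℝ 2 (gg (p/2) f) Ω := fun z hz => (gg_cd (hfa z hz)).contDiffWithinAt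
  have hl : ∀ z ∈ Ω, 0 ≤ lap (gg (p/2) f) z := fun z hz => gg_lap (by positivity) (hfa z hz)
  obtain ⟨C0, hC0, hev⟩ := D.gbound hν hp hf hμ hfin
  obtain ⟨a, c, ha0, ha1, hc0, hh1, hh2⟩ := D.hopf
  obtain ⟨b1, hab1, hb1⟩ := exists_between ha1
  obtain ⟨β1, hβ1⟩ := exists_bmp hab1
  refine ⟨b1, C0 / (2 * c) + ∫ w, gg (p/2) f (ψ w) * β1 (normSq w), ∫ w : ℂ, β1 (normSq w),
    by linarith, hb1, hβ1.disc_pos ha0 hb1, ?_⟩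
  intro a2 b2 β2 h1 h2 h3 hβ2
  obtain ⟨k, hk⟩ := exists_rad ha0 hab1 h1 h2 h3 hβ1 hβ2
  refine ⟨?_, bmp_mass D.conf hb1 h3 hβ1 hβ2 hk⟩
  have hTF := EE_TF D.conf hk h3
  have hp2 := pairing2 D.conf hb1 h3 hβ1 hβ2 hk hg.continuousOn
  rw [green D.conf.op hTF hg] at hp2
  have hEle : ∀ z ∈ Ω, EE Ω τ k z ≤ c⁻¹ * (- φ z) := by
    intro z hz
    rw [EE_of_mem hz]
    have hcc : ∀ x : ℝ, φ z ≤ c * x → - x ≤ c⁻¹ * (- φ z) := by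
      intro x hx
      have h7 := mul_le_mul_of_nonneg_left hx (inv_pos.2 hc0).le
      rw [← mul_assoc, inv_mul_cancel₀ hc0.ne', one_mul] at h7
      linarith
    rcases le_total a (normSq (τ z)) with h | h
    · exact (hk.le _ h (D.conf.nsq z hz).le).trans (hcc _ (hh1 z hz h))
    · exact (hk.le' _ h).trans (hcc _ (hh2 z hz h))
  -- upper bound of φ on the support
  obtain ⟨η, hη, hηle⟩ : ∃ η : ℝ, η < 0 ∧ ∀ z ∈ tsupport (EE Ω τ k), φ z ≤ η := by
    rcases (tsupport (EE Ω τ k)).eq_empty_or_nonempty with he | hne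
    · exact ⟨-1, by norm_num, by simp [he]⟩
    · obtain ⟨z0, hz0, hmx⟩ := hTF.cs.isCompact.exists_isMaxOn hne (D.ex.subh.1.mono hTF.ts)
      exact ⟨φ z0, D.ex.neg z0 (hTF.ts hz0), fun z hz => hmx hz⟩
  obtain ⟨r, ⟨hi, hle⟩, hr⟩ := (hev.and (Ioo_mem_nhdsLT (show η / 2 < 0 by linarith))).exists
  have hEint : Integrable (fun z => EE Ω τ k z * lap (gg (p/2) f) z) := by
    have := cmul_integrable D.conf.op (u := lap (gg (p/2) f)) (fun z hz =>
      (lap_continuousAt (gg_cd (hfa z hz))).continuousWithinAt) hTF.cd.continuous hTF.cs hTF.ts volume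
    simpa [mul_comm] using this
  have hcmp : ∫ z, EE Ω τ k z * lap (gg (p/2) f) z ≤ 2 * c⁻¹ * C0 := by
    have e1 : ∫ z, EE Ω τ k z * lap (gg (p/2) f) z = ∫ z in Ω, EE Ω τ k z * lap (gg (p/2) f) z := by
      symm
      apply setIntegral_eq_integral_of_forall_compl_eq_zero
      intro z hz
      simp [EE, hz]
    rw [e1]
    have e2 : ∫ z in Ω, EE Ω τ k z * lap (gg (p/2) f) z ≤
        ∫ z in Ω, 2 * c⁻¹ * ((max (φ z) r - φ z) * lap (gg (p/2) f) z) := by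
      apply setIntegral_mono_on hEint.integrableOn (hi.const_mul _) D.conf.op.measurableSet
      intro z hz
      rw [← mul_assoc]
      apply mul_le_mul_of_nonneg_right _ (hl z hz)
      have hci := inv_pos.2 hc0
      by_cases hzs : z ∈ tsupport (EE Ω τ k)
      · have h8 := hηle z hzs
        have h9 : r - φ z ≤ max (φ z) r - φ z := by linarith [le_max_right (φ z) r]
        have h10 : - φ z ≤ 2 * (max (φ z) r - φ z) := by linarith [hr.1]
        calc EE Ω τ k z ≤ c⁻¹ * (- φ z) := hEle z hz
          _ ≤ c⁻¹ * (2 * (max (φ z) r - φ z)) := mul_le_mul_of_nonneg_left h10 hci.le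
          _ = _ := by ring
      · rw [image_eq_zero_of_notMem_tsupport hzs]
        have : 0 ≤ max (φ z) r - φ z := by linarith [le_max_left (φ z) r]
        positivity
    rw [integral_const_mul] at e2
    exact e2.trans (mul_le_mul_of_nonneg_left hle (by positivity))
  rw [hp2] at hcmp
  have : C0 / (2 * c) = 2 * c⁻¹ * C0 / 4 := by field_simp; ring
  rw [this]
  linarith

end


theorem polar_nonneg {a b : ℝ} {β : ℝ → ℝ} (hβ : Bmp a b β) {v : ℂ → ℝ}
    (hv : ∀ R : ℝ, 0 < R → a < R ^ 2 → R ^ 2 < b → 0 ≤ Real.circleAverage v 0 R) :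
    0 ≤ ∫ w, v w * β (normSq w) := by
  rw [← Complex.integral_comp_polarCoord_symm]
  by_cases hi : IntegrableOn (fun p : ℝ × ℝ => p.1 • (v (Complex.polarCoord.symm p) *
      β (normSq (Complex.polarCoord.symm p)))) polarCoord.target
  swap
  · rw [integral_undef hi]
  rw [polarCoord_target] at hi ⊢
  rw [Measure.volume_eq_prod] at hi ⊢
  rw [setIntegral_prod _ hi]
  apply setIntegral_nonneg measurableSet_Ioi
  intro R hR
  have hR : 0 < R := hR
  have hn : ∀ θ : ℝ, Complex.polarCoord.symm (R, θ) = circleMap 0 R θ := by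
    intro θ
    rw [Complex.polarCoord_symm_apply, circleMap_zero, Complex.exp_mul_I]
    simp
  have hn2 : ∀ θ : ℝ, normSq (circleMap 0 R θ) = R ^ 2 := by
    intro θ
    rw [Complex.normSq_eq_norm_sq, norm_circleMap_zero, sq_abs]
  simp only [hn, hn2, smul_eq_mul]
  by_cases h0 : β (R ^ 2) = 0
  · simp [h0]
  have hs := hβ.supp _ h0
  have h1 := hv R hR hs.1 hs.2
  rw [Real.circleAverage_def] at h1
  have h2 : ∫ θ in Ioo (-π) π, v (circleMap 0 R θ) = ∫ θ in (0:ℝ)..2*π, v (circleMap 0 R θ) := by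
    rw [← integral_Ioc_eq_integral_Ioo, ← intervalIntegral.integral_of_le (by linarith [Real.pi_pos])]
    have hper : Function.Periodic (fun θ => v (circleMap 0 R θ)) (2 * π) := fun θ => by
      simp only [periodic_circleMap 0 R θ]
    have := hper.intervalIntegral_add_eq (-π) 0
    rw [show -π + 2 * π = π by ring, zero_add] at this
    exact this
  have h3 : ∀ θ : ℝ, R * (v (circleMap 0 R θ) * β (R^2)) = (R * β (R^2)) * v (circleMap 0 R θ) :=
    fun θ => by ring
  simp only [h3]
  rw [integral_const_mul, h2]
  refine mul_nonneg (mul_nonneg hR.le (hβ.nn _)) ?_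
  rw [smul_eq_mul] at h1
  exact nonneg_of_mul_nonneg_right h1 (by positivity)

theorem pigeon {a b : ℝ} {β : ℝ → ℝ} (hβ : Bmp a b β) (hb : b < 1) {G : ℂ → ℝ}
    (hG : ContinuousOn G (ball 0 1)) {C m0 : ℝ} (hm0 : 0 < m0)
    (h1 : ∫ w, G w * β (normSq w) ≤ C) (h2 : ∫ w, β (normSq w) = m0) :
    ∃ R : ℝ, 0 < R ∧ a < R ^ 2 ∧ R ^ 2 < b ∧ Real.circleAverage G 0 R ≤ C / m0 + 1 := by
  by_contra hcon
  push Not at hcon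
  set M := C / m0 + 1 with hM
  have h3 := polar_nonneg hβ (v := fun w => G w - M) (fun R h0 ha hb' => by
    have hR1 : R < 1 := by nlinarith
    have hGi : CircleIntegrable G 0 R := by
      apply ContinuousOn.circleIntegrable h0.le
      apply hG.mono
      intro w hw
      rw [mem_sphere_zero_iff_norm] at hw
      simp [hw, hR1]
    have := hcon R h0 ha hb'
    have h4 : Real.circleAverage (fun w => G w - M) 0 R = Real.circleAverage G 0 R - M := by
      have := Real.circleAverage_fun_sub hGi (circleIntegrable_const M 0 R)
      rw [Real.circleAverage_const] at this
      exact this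
    linarith)
  have hi1 := hβ.disc_int hb hG
  have hi2 : Integrable (fun w => β (normSq w)) := by
    simpa using hβ.disc_int hb (u := fun _ => 1) continuousOn_const
  have h5 : ∫ w, (G w - M) * β (normSq w) = (∫ w, G w * β (normSq w)) - M * m0 := by
    rw [← h2, ← integral_const_mul, ← integral_sub hi1 (hi2.const_mul M)]
    congr 1
    ext w
    ring
  rw [h5] at h3
  have : M * m0 = C + m0 := by
    rw [hM]; field_simp
  linarith


theorem fourier_form {R : ℝ} (hR : 0 < R) (g : C(AddCircle (2 * π), ℂ))
    (hg : g ∈ Submodule.span ℂ (range (@fourier (2 * π)))) :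
    ∃ Q1 Q2 : ℂ → ℂ, Differentiable ℂ Q1 ∧ Differentiable ℂ Q2 ∧
      ∀ θ : ℝ, g (θ : AddCircle (2 * π)) =
        Q1 (circleMap 0 R θ) + (starRingEnd ℂ) (Q2 (circleMap 0 R θ)) := by
  have hR' : (R : ℂ) ≠ 0 := by exact_mod_cast hR.ne'
  have hq : ∀ θ : ℝ, circleMap 0 R θ / R = Complex.exp (θ * I) := by
    intro θ
    rw [circleMap_zero]; field_simp
  have hπ : (π : ℂ) ≠ 0 := by exact_mod_cast Real.pi_ne_zero
  induction hg using Submodule.span_induction with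
  | mem x hx =>
    obtain ⟨n, rfl⟩ := hx
    obtain ⟨k, rfl | rfl⟩ := n.eq_nat_or_neg
    · refine ⟨fun w => (w / R) ^ k, fun _ => 0, by fun_prop, by fun_prop, fun θ => ?_⟩
      beta_reduce
      rw [fourier_coe_apply, hq, ← Complex.exp_nat_mul]
      simp only [map_zero, add_zero]
      congr 1
      push_cast
      field_simp
    · refine ⟨fun _ => 0, fun w => (w / R) ^ k, by fun_prop, by fun_prop, fun θ => ?_⟩
      beta_reduce
      rw [fourier_coe_apply, hq, ← Complex.exp_nat_mul, ← Complex.exp_conj, zero_add]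
      congr 1
      simp only [map_mul, map_natCast, conj_ofReal, conj_I]
      push_cast
      field_simp
  | zero => exact ⟨fun _ => 0, fun _ => 0, by fun_prop, by fun_prop, by simp⟩
  | add x y _ _ hx hy =>
    obtain ⟨Q1, Q2, d1, d2, h⟩ := hx
    obtain ⟨Q1', Q2', d1', d2', h'⟩ := hy
    refine ⟨Q1 + Q1', Q2 + Q2', d1.add d1', d2.add d2', fun θ => ?_⟩
    simp only [ContinuousMap.add_apply, h, h', Pi.add_apply, map_add]
    ring
  | smul c x _ hx =>
    obtain ⟨Q1, Q2, d1, d2, h⟩ := hx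
    refine ⟨fun w => c * Q1 w, fun w => (starRingEnd ℂ) c * Q2 w, d1.const_mul _, d2.const_mul _,
      fun θ => ?_⟩
    simp only [ContinuousMap.smul_apply, h, map_mul, Complex.conj_conj, smul_eq_mul]
    ring

theorem approx_circle {R : ℝ} (hR : 0 < R) {G : ℂ → ℝ} (hG : ContinuousOn G (sphere 0 R)) :
    ∃ Q : ℂ → ℂ, Differentiable ℂ Q ∧
      ∀ w ∈ sphere (0:ℂ) R, G w ≤ (Q w).re ∧ (Q w).re ≤ G w + 1 := by
  have : Fact (0 < 2 * π) := ⟨by positivity⟩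
  have hper : Function.Periodic (fun θ : ℝ => ((G (circleMap 0 R θ) + 1/2 : ℝ) : ℂ)) (2 * π) :=
    fun θ => by simp only [periodic_circleMap 0 R θ]
  have hc : Continuous (fun θ : ℝ => ((G (circleMap 0 R θ) + 1/2 : ℝ) : ℂ)) := by
    have : Continuous (fun θ : ℝ => G (circleMap 0 R θ)) :=
      hG.comp_continuous (continuous_circleMap 0 R) (fun θ => circleMap_mem_sphere 0 hR.le θ)
    exact continuous_ofReal.comp (this.add continuous_const)
  let g : C(AddCircle (2 * π), ℂ) := ⟨hper.lift, by
    exact continuous_coinduced_dom.mpr hc⟩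
  have hmem : g ∈ (Submodule.span ℂ (range (@fourier (2 * π)))).topologicalClosure := by
    rw [span_fourier_closure_eq_top]; trivial
  have hmem' : g ∈ closure (Submodule.span ℂ (range (@fourier (2 * π))) : Set C(AddCircle (2 * π), ℂ)) := hmem
  obtain ⟨s, hs, hd⟩ := Metric.mem_closure_iff.1 hmem' (1/2) (by norm_num)
  obtain ⟨Q1, Q2, d1, d2, h⟩ := fourier_form hR s hs
  refine ⟨Q1 + Q2, d1.add d2, fun w hw => ?_⟩
  obtain ⟨θ, rfl⟩ : ∃ θ, circleMap 0 R θ = w := by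
    have : w ∈ range (circleMap 0 R) := by rw [range_circleMap, abs_of_pos hR]; exact hw
    exact this
  have h1 : dist (g (θ : AddCircle (2*π))) (s θ) < 1/2 :=
    (ContinuousMap.dist_apply_le_dist _).trans_lt hd
  have h2 : g (θ : AddCircle (2*π)) = ((G (circleMap 0 R θ) + 1/2 : ℝ) : ℂ) := hper.lift_coe θ
  rw [dist_eq_norm, h2, h] at h1
  have h3 := (Complex.abs_re_le_norm _).trans_lt h1
  simp only [sub_re, add_re, ofReal_re, conj_re] at h3
  rw [abs_lt] at h3
  simp only [Pi.add_apply, add_re]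
  constructor <;> linarith [h3.1, h3.2]

theorem disc_majorant {R : ℝ} (hR : 0 < R) (hR1 : R < 1) {G : ℂ → ℝ}
    (hG : ∀ w ∈ ball (0:ℂ) 1, ContDiffAt ℝ 2 G w) (hl : ∀ w ∈ ball (0:ℂ) 1, 0 ≤ lap G w) :
    ∃ Q : ℂ → ℂ, Differentiable ℂ Q ∧ (∀ w ∈ closedBall (0:ℂ) R, G w ≤ (Q w).re) ∧
      (Q 0).re ≤ Real.circleAverage G 0 R + 1 ∧ (Q 0).im = 0 := by
  have hGc : ContinuousOn G (ball 0 1) := fun w hw => (hG w hw).continuousAt.continuousWithinAt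
  have hsub : closedBall (0:ℂ) R ⊆ ball 0 1 := closedBall_subset_ball hR1
  obtain ⟨Q0, d, hQ⟩ := approx_circle hR (hGc.mono (sphere_subset_closedBall.trans hsub))
  have key : ∃ Q : ℂ → ℂ, Differentiable ℂ Q ∧ (∀ w, (Q w).re = (Q0 w).re) ∧ (Q 0).im = 0 := by
    refine ⟨fun w => Q0 w - ((Q0 0).im : ℂ) * I, d.sub_const _, by simp, by simp⟩
  obtain ⟨Q, dQ, hre, him⟩ := key
  have hH : ∀ w, InnerProductSpace.HarmonicAt (fun w => (Q w).re) w := fun w =>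
    (dQ.analyticAt w).harmonicAt_re
  refine ⟨Q, dQ, ?_, ?_, him⟩
  · have := max_principle (C := closedBall (0:ℂ) R) (V := ball 0 R)
      (u := fun w => G w + (-1) * (Q w).re) (m := 0) (isCompact_closedBall _ _) isOpen_ball
      ball_subset_closedBall
      ((hGc.mono hsub).add (((continuous_re.comp dQ.continuous).continuousOn).const_smul (-1:ℝ)))
      (fun z hz => (hG z (hsub (ball_subset_closedBall hz))).add
        (contDiffAt_const.mul (hH z).1))
      (fun z hz => by
        have hz1 := hsub (ball_subset_closedBall hz)
        rw [lap_add (hG z hz1) (contDiffAt_const.mul (hH z).1), lap_const_mul _ (hH z).1,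
          lap_of_harmonicAt (hH z)]
        have := hl z hz1
        linarith)
      (fun z hz hz' => by
        have : z ∈ sphere (0:ℂ) R := by
          rw [mem_closedBall] at hz
          rw [mem_ball, not_lt] at hz'
          exact le_antisymm hz hz'
        have := (hQ z this).1
        rw [hre]; linarith)
    intro w hw
    have := this w hw
    linarith
  · have h1 := InnerProductSpace.HarmonicOnNhd.circleAverage_eq (f := fun w => (Q w).re)
      (c := 0) (R := R) (fun w _ => hH w)
    rw [← h1]
    have hsp : ContinuousOn G (sphere 0 |R|) := by
      rw [abs_of_pos hR]; exact hGc.mono (sphere_subset_closedBall.trans hsub)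
    have h4 : Real.circleAverage (fun w => G w + 1) 0 R = Real.circleAverage G 0 R + 1 := by
      have := Real.circleAverage_fun_add hsp.circleIntegrable' (circleIntegrable_const (1:ℝ) 0 R)
      rw [Real.circleAverage_const] at this
      exact this
    rw [← h4]
    apply Real.circleAverage_mono
    · exact ((continuous_re.comp dQ.continuous).continuousOn).circleIntegrable'
    · exact (hsp.add continuousOn_const).circleIntegrable'
    · intro w hw
      rw [abs_of_pos hR] at hw
      rw [hre]; exact (hQ w hw).2


theorem herglotz_bound {Q : ℂ → ℂ} (hQ : Differentiable ℂ Q) {r s M : ℝ} (hr : 0 < r) (hrs : r < s)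
    (hpos : ∀ w ∈ closedBall (0:ℂ) s, 0 ≤ (Q w).re) (h0 : ‖Q 0‖ ≤ M) (k : ℕ) :
    ‖((k.factorial : ℂ)⁻¹ * iteratedDeriv k Q 0)‖
      ≤ (2 * 1 * r / (s - r) + M * (s + r) / (s - r)) / r ^ k := by
  have hsr : 0 < s - r := by linarith
  have hb : ∀ z ∈ sphere (0:ℂ) r, ‖Q z‖ ≤ 2 * 1 * r / (s - r) + M * (s + r) / (s - r) := by
    intro z hz
    have hz' : ‖z‖ = r := by simpa using hz
    have := Complex.borelCaratheodory (f := fun w => - Q w) (M := 1) (R := s) (z := z) one_pos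
      hQ.neg.differentiableOn (fun w hw => by
        have := hpos w (ball_subset_closedBall hw)
        show (- Q w).re ≤ 1
        rw [neg_re]; linarith) (hr.trans hrs) (by simp [hz', hrs])
    simp only [norm_neg, hz'] at this
    refine this.trans ?_
    gcongr
    linarith
  have h1 := Complex.norm_iteratedDeriv_le_of_forall_mem_sphere_norm_le k hr hQ.diffContOnCl hb
  rw [norm_mul, norm_inv, Complex.norm_natCast]
  have hk : (0:ℝ) < k.factorial := by exact_mod_cast k.factorial_pos
  rw [inv_mul_le_iff₀ hk]
  rwa [← mul_div_assoc]

theorem compactness {G : ℂ → ℝ} (hG0 : ∀ w, 0 ≤ G w) {Q : ℕ → ℂ → ℂ}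
    (hQ : ∀ n, Differentiable ℂ (Q n)) {M : ℝ} (hM : ∀ n, ‖Q n 0‖ ≤ M)
    (hQG : ∀ r : ℝ, r < 1 → ∀ᶠ n in atTop, ∀ w ∈ closedBall (0:ℂ) r, G w ≤ (Q n w).re) :
    ∃ F : ℂ → ℂ, DifferentiableOn ℂ F (ball 0 1) ∧ ∀ w ∈ ball (0:ℂ) 1, G w ≤ (F w).re := by
  set U : Filter ℕ := (hyperfilter ℕ : Filter ℕ) with hU
  have hUle : U ≤ atTop := Nat.hyperfilter_le_atTop
  let a : ℕ → ℕ → ℂ := fun n k => (k.factorial : ℂ)⁻¹ * iteratedDeriv k (Q n) 0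
  have hbd : ∀ r : ℝ, 0 < r → r < 1 → ∃ B : ℝ, ∀ᶠ n in U, ∀ k, ‖a n k‖ ≤ B / r ^ k := by
    intro r hr hr1
    refine ⟨2 * 1 * r / ((1+r)/2 - r) + M * ((1+r)/2 + r) / ((1+r)/2 - r), ?_⟩
    filter_upwards [hUle (hQG ((1+r)/2) (by linarith))] with n hn k
    exact herglotz_bound (hQ n) hr (by linarith) (fun w hw => (hG0 w).trans (hn w hw)) (hM n) k
  have hlim : ∀ k, ∃ c, Tendsto (fun n => a n k) U (𝓝 c) := by
    intro k
    obtain ⟨B, hB⟩ := hbd (1/2) (by norm_num) (by norm_num)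
    have hc := isCompact_closedBall (0:ℂ) (B / (1/2) ^ k)
    obtain ⟨c, -, hc⟩ := hc.ultrafilter_le_nhds ((hyperfilter ℕ).map (fun n => a n k)) (by
      rw [le_principal_iff]
      show ∀ᶠ n in U, a n k ∈ closedBall (0:ℂ) (B / (1/2) ^ k)
      filter_upwards [hB] with n hn
      simpa using hn k)
    exact ⟨c, hc⟩
  choose c hc using hlim
  have hcb : ∀ r : ℝ, 0 < r → r < 1 → ∃ B : ℝ, (∀ᶠ n in U, ∀ k, ‖a n k‖ ≤ B / r ^ k) ∧
      ∀ k, ‖c k‖ ≤ B / r ^ k := by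
    intro r hr hr1
    obtain ⟨B, hB⟩ := hbd r hr hr1
    exact ⟨B, hB, fun k => le_of_tendsto (hc k).norm (hB.mono fun n hn => hn k)⟩
  have hterm : ∀ {r t B : ℝ} {k : ℕ} {x w : ℂ}, 0 < r → ‖w‖ ≤ t → ‖x‖ ≤ B / r ^ k →
      ‖x * w ^ k‖ ≤ B * (t / r) ^ k := by
    intro r t B k x w hr hw hx
    rw [norm_mul, norm_pow]
    calc ‖x‖ * ‖w‖ ^ k ≤ (B / r ^ k) * t ^ k := by gcongr; exact (norm_nonneg _).trans hx
      _ = _ := by rw [div_pow]; ring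
  have hsum : ∀ {r t B : ℝ}, 0 < r → 0 ≤ t → t < r → Summable (fun k : ℕ => B * (t / r) ^ k) := by
    intro r t B hr ht htr
    exact (summable_geometric_of_lt_one (by positivity) ((div_lt_one hr).2 htr)).mul_left B
  refine ⟨fun w => ∑' k, c k * w ^ k, ?_, ?_⟩
  · intro w hw
    have hw : ‖w‖ < 1 := by simpa using hw
    obtain ⟨t, ht, ht1⟩ := exists_between hw
    obtain ⟨r, hr, hr1⟩ := exists_between ht1
    have ht0 : 0 ≤ t := (norm_nonneg _).trans ht.le
    have hr0 : 0 < r := ht0.trans_lt hr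
    obtain ⟨B, -, hB⟩ := hcb r hr0 hr1
    have := differentiableOn_tsum_of_summable_norm (F := fun k w => c k * w ^ k) (U := ball (0:ℂ) t)
      (hsum (B := B) hr0 ht0 hr) (fun k => by fun_prop) isOpen_ball (fun k w hw => by
        have hw : ‖w‖ < t := by simpa using hw
        exact hterm hr0 hw.le (hB k))
    exact (this.differentiableAt (isOpen_ball.mem_nhds (by simpa using ht))).differentiableWithinAt
  · intro w hw
    have hw : ‖w‖ < 1 := by simpa using hw
    obtain ⟨r, hr, hr1⟩ := exists_between hw
    have hr0 : 0 < r := (norm_nonneg _).trans_lt hr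
    obtain ⟨B, hB, -⟩ := hcb r hr0 hr1
    have h1 : Tendsto (fun n => ∑' k, a n k * w ^ k) U (𝓝 (∑' k, c k * w ^ k)) :=
      tendsto_tsum_of_dominated_convergence (hsum (B := B) hr0 (norm_nonneg w) hr)
        (fun k => (hc k).mul_const _) (hB.mono fun n hn k => hterm hr0 le_rfl (hn k))
    have h2 : ∀ n, ∑' k, a n k * w ^ k = Q n w := by
      intro n
      have := Complex.taylorSeries_eq_of_entire' (c := 0) (z := w) (hQ n)
      simpa using this
    simp only [h2] at h1
    have h3 := (continuous_re.tendsto _).comp h1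
    refine ge_of_tendsto h3 ?_
    filter_upwards [hUle (hQG r hr1)] with n hn
    exact hn w (by simpa using hr.le)


theorem Dat.hard {Ω K : Set ℂ} {ψ τ : ℂ → ℂ} {φ : ℂ → ℝ} {m : ℝ} {ν : Measure ℂ}
    (D : Dat Ω K ψ τ φ m) (hν : IsRieszMeasure φ Ω ν) {p : ℝ} (hp : 0 < p)
    {f : ℂ → ℂ} (hf : DifferentiableOn ℂ f Ω)
    {μfam : ℝ → Measure ℂ} (hμ : ∀ r : ℝ, r < 0 → IsMAMeasure φ Ω ν r (μfam r))
    (hfin : psNormPow p μfam f < ⊤) :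
    ∃ h : ℂ → ℝ, HarmonicOn h Ω ∧ ∀ z ∈ Ω, ‖f z‖ ^ p ≤ h z := by
  obtain ⟨b1, C, m0, hb0, hb1, hm0, hbd⟩ := D.bound hν hp hf hμ hfin
  let G : ℂ → ℝ := fun w => gg (p/2) (fun x => f (ψ x)) w
  have hfa : ∀ w ∈ ball (0:ℂ) 1, AnalyticAt ℂ (fun x => f (ψ x)) w := fun w hw =>
    (hf.analyticAt (D.conf.op.mem_nhds (D.conf.mp w hw))).comp (D.conf.an w hw)
  have hGd : ∀ w ∈ ball (0:ℂ) 1, ContDiffAt ℝ 2 G w := fun w hw => gg_cd (hfa w hw)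
  have hGl : ∀ w ∈ ball (0:ℂ) 1, 0 ≤ lap G w := fun w hw => gg_lap (by positivity) (hfa w hw)
  have hGc : ContinuousOn G (ball 0 1) := fun w hw => (hGd w hw).continuousAt.continuousWithinAt
  have hG0 : ∀ w, 0 ≤ G w := fun w => gg_nn _ _ _
  have step : ∀ s : ℝ, 0 < s → s < 1 → ∃ Q : ℂ → ℂ, Differentiable ℂ Q ∧
      (∀ w ∈ closedBall (0:ℂ) s, G w ≤ (Q w).re) ∧ ‖Q 0‖ ≤ C / m0 + 1 + 1 := by
    intro s hs0 hs1
    have h1 : max b1 (s^2) < 1 := max_lt hb1 (by nlinarith)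
    obtain ⟨b2, hb2, hb21⟩ := exists_between h1
    obtain ⟨β, hβ⟩ := exists_bmp hb2
    obtain ⟨e1, e2⟩ := hbd _ _ β (le_max_left _ _) hb2 hb21 hβ
    obtain ⟨R, hR0, hR1, hR2, hR⟩ := pigeon hβ hb21 hGc hm0 e1 e2
    have hRs : s < R := by
      have := (le_max_right b1 (s^2)).trans_lt hR1
      exact lt_of_pow_lt_pow_left₀ 2 hR0.le this
    obtain ⟨Q, dQ, q1, q2, q3⟩ := disc_majorant hR0 (by nlinarith) hGd hGl
    refine ⟨Q, dQ, fun w hw => q1 w (closedBall_subset_closedBall hRs.le hw), ?_⟩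
    have hre : 0 ≤ (Q 0).re := (hG0 0).trans (q1 0 (by simp [hR0.le]))
    have : Q 0 = ((Q 0).re : ℂ) := by
      apply Complex.ext <;> simp [q3]
    rw [this, Complex.norm_real, Real.norm_of_nonneg hre]
    linarith
  have hs0 : ∀ n : ℕ, 0 < 1 - 1 / ((n:ℝ) + 2) := fun n => by
    have : 1 / ((n:ℝ) + 2) < 1 := by
      rw [div_lt_one (by positivity)]
      have : (0:ℝ) ≤ n := n.cast_nonneg
      linarith
    linarith
  have hs1 : ∀ n : ℕ, 1 - 1 / ((n:ℝ) + 2) < 1 := fun n => by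
    have : 0 < 1 / ((n:ℝ) + 2) := by positivity
    linarith
  choose Q dQ hQ1 hQ2 using fun n : ℕ => step _ (hs0 n) (hs1 n)
  have hst : Tendsto (fun n : ℕ => 1 - 1 / ((n:ℝ) + 2)) atTop (𝓝 1) := by
    have h1 : Tendsto (fun n : ℕ => 1 / ((n:ℝ) + 2)) atTop (𝓝 0) := by
      simp only [one_div]
      exact tendsto_inv_atTop_zero.comp
        (tendsto_atTop_add_const_right _ _ tendsto_natCast_atTop_atTop)
    simpa using (tendsto_const_nhds (x := (1:ℝ))).sub h1
  obtain ⟨F, dF, hF⟩ := compactness hG0 dQ hQ2 (fun r hr => by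
    filter_upwards [hst.eventually (lt_mem_nhds hr)] with n hn w hw
    exact hQ1 n w (closedBall_subset_closedBall hn.le hw))
  have hH : ∀ z ∈ Ω, InnerProductSpace.HarmonicAt (fun z => (F (τ z)).re) z := fun z hz =>
    ((dF.analyticAt (isOpen_ball.mem_nhds (D.conf.mpt z hz))).comp (D.conf.ant z hz)).harmonicAt_re
  refine ⟨fun z => (F (τ z)).re, ⟨fun z hz => (hH z hz).1.contDiffWithinAt,
    fun z hz => lap_of_harmonicAt (hH z hz)⟩, fun z hz => ?_⟩
  have h1 := hF _ (D.conf.mpt z hz)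
  have h2 : G (τ z) = gg (p/2) f z := by
    simp only [G, gg, D.conf.right z hz]
  rw [h2] at h1
  exact (gg_ge hp f z).trans h1


/-- If `φ` is a negative continuous subharmonic exhaustion of a bounded
domain `Ω ∋ 0` bounded by an analytic Jordan curve, harmonic off a compact `K ⊆ Ω`, then for
`p > 0` the Poletsky–Stessin Hardy space `H^p_φ(Ω)` coincides with the classical `H^p(Ω)`:
`f ∈ H^p_φ(Ω)` iff `|f|^p` has a harmonic majorant on `Ω`. -/
theorem stmt0 (Ω : Set ℂ) (hΩ : AnalyticJordanDomain Ω)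
    (φ : ℂ → ℝ) (hφ : IsExhaustion φ Ω)
    (K : Set ℂ) (hK : IsCompact K) (hKΩ : K ⊆ Ω) (hharm : HarmonicOn φ (Ω \ K))
    (p : ℝ) (hp : 0 < p)
    (ν : Measure ℂ) (hν : IsRieszMeasure φ Ω ν)
    (μfam : ℝ → Measure ℂ) (hμ : ∀ r : ℝ, r < 0 → IsMAMeasure φ Ω ν r (μfam r)) :
    {f : ℂ → ℂ | MemPS p Ω μfam f} = {f : ℂ → ℂ | MemHClassical p Ω f} := by
  obtain ⟨ψ, τ, m, D⟩ := exists_dat hΩ hφ hK hKΩ hharm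
  ext f
  constructor
  · rintro ⟨hf, hfin⟩
    exact ⟨hf, D.hard hν hp hf hμ hfin⟩
  · rintro ⟨hf, h, hh, hle⟩
    exact ⟨hf, D.easy hν hμ hh hle⟩

end
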